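/- There exists an absolute constant c₃ such that the following holds: for every polynomial P ∈ F₂[z] with P(0) = 1, with q the odd integer attached to P, r the multiplicative order of 2 modulo q, and A(P,x) the counting function of 𝒜(P), one has A(P,x) ≤ 7·c₃^r · x/(log x)^{r/φ(q)} for all x > 1, where φ is Euler's totient function. -/

import Mathlib

/-!
Write `q = q(P)`, `r` for the order of `2` modulo `q`, and call a prime bad if it is odd and
congruent to a power of `2` modulo `q`.

*No element of `𝒜(P)` is divisible by a bad prime* (`not_dvd_of_mem`). Modulo `2` the generating
function of the partitions gives `P · ∏_{a ∈ 𝒜} (1 - z ^ a) = 1`. Take a bad prime `p` with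
`p ≡ 2 ^ j`, substitute `ζ z` for `z` and multiply over the `p`-th roots of unity `ζ` in an
algebraic closure of `F₂`. The roots `β` of `P` satisfy `β ^ q = 1`, so `β ^ p = β ^ (2 ^ j)` and
raising to the power `p` permutes them like Frobenius; hence the product of the `P(ζ z)` is
`P(z ^ p)`. The factors with `p ∤ a` turn into `1 - z ^ (p a)`, while those with `p ∣ a` turn into
`(1 - z ^ a) ^ p`. Comparing with the same identity in `z ^ p`, the least `a ∈ 𝒜` divisible by `p`
would contribute an uncancelled term `z ^ a`.

*Sieving out the bad primes.* Let `f` be the completely multiplicative indicator function of the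
integers free of bad primes and `F(σ) = ∑ f(n) n ^ (-σ)`. The bad primes have density `r / φ(q)`,
and uniformity in `q` is needed up to a factor `C ^ r`. Since `log q ≤ r`
(`log_le_orderOf`), an error `O(log q + 1)` in `log F(σ)` is affordable, and such an error comes
from a polynomial lower bound `|L(σ, χ)| ≫ q ^ (-5)` for `1 < σ ≤ 2` and `χ ≠ 1`
(`norm_dser_char_ge`). For `χ` of order greater than `2`, the inequality
`3 + 4 cos θ + cos 2θ ≥ 0` gives a lower bound at a point `1 + η` with `η ≍ q ^ (-5)`, which the
Lipschitz continuity of `L(σ, χ)` carries to `1 < σ ≤ 1 + η`. For quadratic `χ`, an effective form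
of the Lambert series proof of `L(1, χ) ≠ 0` applies to `σ` close to `1`. Further away from `1` the
trivial bound `|L(σ, χ)| ≫ σ - 1` suffices. A nonnegative combination of characters
(`exists_char_weights`) detects the subgroup generated by `2`, so only lower bounds for the
`L`-functions are needed, and `F(1 + 1 / y) ≤ exp (5 r + K₂) · y ^ (1 - r / φ(q))`
(`norm_dser_sieveFun_le`).

*Counting.* With `G` the set of `n ≤ x` free of bad primes, Rankin's trick bounds `∑_{n ∈ G} 1 / n`
by `e · F(1 + 1 / log x)`. As `G` is closed under divisors, the identity `log n = ∑_{d ∣ n} Λ(d)`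
and Chebyshev's bound `ψ(t) ≪ t` yield `|G| log x ≪ x ∑_{n ∈ G} 1 / n`
(`card_goodSet_mul_log_le`), which gives the claim for `x ≥ e`. For `x < e` the claim is trivial.
-/

open Polynomial

/-- Number of partitions of `n` with all parts in `A` (this is `1` for `n = 0`). -/
noncomputable def partitionCount (A : Set ℕ) (n : ℕ) : ℕ :=
  Nat.card {p : n.Partition // ∀ i ∈ p.parts, i ∈ A}

/-- The odd integer `q = q(P)` attached to `P`: the lcm of the orders of the irreducible
factors of `P`, characterized as the least `m > 0` such that every irreducible factor of `P`
divides `X ^ m - 1` over `F₂`. -/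
noncomputable def qOf (P : Polynomial (ZMod 2)) : ℕ :=
  sInf {m | 0 < m ∧ ∀ Q : Polynomial (ZMod 2), Irreducible Q → Q ∣ P → Q ∣ X ^ m - 1}

/-- The counting function `A(P,x) = |{n : 1 ≤ n ≤ x, n ∈ 𝒜}|`. -/
noncomputable def countA (A : Set ℕ) (x : ℝ) : ℕ :=
  Set.ncard {n : ℕ | n ∈ A ∧ 1 ≤ n ∧ (n : ℝ) ≤ x}

/-! ### Elements of `𝒜(P)` avoid the bad primes -/

lemma zmod2_eq_one {c : ZMod 2} (h : c ≠ 0) : c = 1 := by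
  revert h; revert c; decide

lemma monic_of_coeff_zero {P : (ZMod 2)[X]} (hP : P.coeff 0 = 1) : P.Monic := by
  have h0 : P ≠ 0 := by rintro rfl; simp at hP
  exact zmod2_eq_one (leadingCoeff_ne_zero.mpr h0)

/-- The infimum defining `qOf P` is attained when `P(0) = 1`: the set is non-empty because `X` is a
unit of the finite ring `F₂[X]/(P)`. -/
lemma qOf_mem {P : (ZMod 2)[X]} (hP : P.coeff 0 = 1) :
    0 < qOf P ∧ ∀ Q : (ZMod 2)[X], Irreducible Q → Q ∣ P → Q ∣ X ^ qOf P - 1 := by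
  have hne : {m | 0 < m ∧ ∀ Q : (ZMod 2)[X], Irreducible Q → Q ∣ P → Q ∣ X ^ m - 1}.Nonempty := by
    have hm := monic_of_coeff_zero hP
    have : Module.Finite (ZMod 2) (AdjoinRoot P) := hm.finite_adjoinRoot
    have : Finite (AdjoinRoot P) := Module.finite_of_finite (ZMod 2)
    have hu : IsUnit (AdjoinRoot.mk P X) := by
      have h1 : X ∣ P - 1 := by rw [X_dvd_iff]; simp [hP]
      obtain ⟨R, hR⟩ := h1
      refine IsUnit.of_mul_eq_one (AdjoinRoot.mk P (-R)) ?_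
      rw [← map_mul, ← map_one (AdjoinRoot.mk P), ← sub_eq_zero, ← map_sub, AdjoinRoot.mk_eq_zero]
      exact ⟨-1, by linear_combination hR⟩
    obtain ⟨u, hu⟩ := hu
    have hfin := isOfFinOrder_of_finite u
    refine ⟨orderOf u, hfin.orderOf_pos, fun Q _ hQ => hQ.trans ?_⟩
    rw [← AdjoinRoot.mk_eq_zero, map_sub, map_pow, ← hu, ← Units.val_pow_eq_pow_val,
      pow_orderOf_eq_one]
    simp
  exact Nat.sInf_mem hne

lemma qOf_odd {P : (ZMod 2)[X]} (hP : P.coeff 0 = 1) : Odd (qOf P) := by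
  obtain ⟨h0, h⟩ := qOf_mem hP
  rw [← Nat.not_even_iff_odd]
  rintro ⟨m, hm⟩
  have hle : qOf P ≤ m := by
    refine Nat.sInf_le ⟨by lia, fun Q hQ hQP => ?_⟩
    have h1 := h Q hQ hQP
    have h2 : (X ^ qOf P - 1 : (ZMod 2)[X]) = (X ^ m - 1) ^ 2 := by
      have : (2 : (ZMod 2)[X]) = 0 := CharTwo.two_eq_zero
      rw [hm]
      linear_combination (X ^ m - 1) * this
    rw [h2] at h1
    exact hQ.prime.dvd_of_dvd_pow h1
  lia

open PowerSeries in
/-- Euler's product for the partitions with parts satisfying `s`, over `F₂`. -/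
lemma partition_gen (s : ℕ → Prop) [DecidablePred s] (N : ℕ) (hs : ∀ i, s i → i ≤ N) :
    (PowerSeries.mk fun n ↦ ((Nat.Partition.restricted n s).card : ZMod 2)) *
      ∏ i ∈ Finset.range N, (if s (i + 1) then 1 - (X : PowerSeries (ZMod 2)) ^ (i + 1) else 1)
        = 1 := by
  let : TopologicalSpace (ZMod 2) := ⊥
  have : DiscreteTopology (ZMod 2) := ⟨rfl⟩
  open scoped PowerSeries.WithPiTopology in
  have h1 := Nat.Partition.hasProd_powerSeriesMk_card_restricted (ZMod 2) s
  have h2 := h1.unique (hasProd_prod_of_ne_finset_one (s := Finset.range N) (by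
    intro b hb
    rw [if_neg]
    intro h
    have := hs _ h
    simp at hb
    lia))
  rw [h2, ← Finset.prod_mul_distrib]
  refine Finset.prod_eq_one fun i _ => ?_
  split_ifs
  · simp_rw [pow_mul]
    exact PowerSeries.WithPiTopology.tsum_pow_mul_one_sub_of_constantCoeff_eq_zero (by simp)
  · simp

open Classical in
/-- The identity `P · ∏_{a ∈ A} (1 - X ^ a) = 1`, truncated modulo `X ^ (N + 1)`. -/
lemma parity_congr {P : (ZMod 2)[X]} {A : Set ℕ}
    (hpar : ∀ n : ℕ, (partitionCount A n : ZMod 2) = P.coeff n) (N : ℕ) :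
    X ^ (N + 1) ∣ P * ∏ i ∈ Finset.range N,
      (if i + 1 ∈ A then 1 - (X : (ZMod 2)[X]) ^ (i + 1) else 1) - 1 := by
  have hs := partition_gen (fun i => i ∈ A ∧ i ≤ N) N (fun i h => h.2)
  set D : (ZMod 2)[X] := ∏ i ∈ Finset.range N,
      (if i + 1 ∈ A then 1 - (X : (ZMod 2)[X]) ^ (i + 1) else 1) with hD
  have hDc : ((D : (ZMod 2)[X]) : PowerSeries (ZMod 2)) =
      ∏ i ∈ Finset.range N, (if (i + 1 ∈ A ∧ i + 1 ≤ N) then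
        1 - (PowerSeries.X : PowerSeries (ZMod 2)) ^ (i + 1) else 1) := by
    rw [hD, ← Polynomial.coeToPowerSeries.ringHom_apply, map_prod]
    refine Finset.prod_congr rfl fun i hi => ?_
    have : i + 1 ≤ N := by simpa using hi
    by_cases h : i + 1 ∈ A <;> simp [h, this]
  rw [← hDc] at hs
  rw [X_pow_dvd_iff]
  intro d hd
  rw [coeff_sub, ← Polynomial.coeff_coe, ← Polynomial.coeff_coe, Polynomial.coe_mul, sub_eq_zero,
    Polynomial.coe_one, ← hs, PowerSeries.coeff_mul, PowerSeries.coeff_mul]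
  refine Finset.sum_congr rfl fun x hx => ?_
  congr 1
  rw [Polynomial.coeff_coe, PowerSeries.coeff_mk, ← hpar, partitionCount, Nat.card_eq_fintype_card,
    Fintype.card_subtype, Nat.Partition.restricted]
  congr 3
  ext p
  have hxd : x.1 ≤ N := by
    have := Finset.HasAntidiagonal.mem_antidiagonal.mp hx
    lia
  have : ∀ i ∈ p.parts, i ≤ N := fun i hi => (p.le_of_mem_parts hi).trans hxd
  constructor
  · exact fun h i hi => ⟨h i hi, this i hi⟩
  · exact fun h i hi => (h i hi).1

section Norm

variable {K : Type*} [Field K]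

/-- The norm of `1 - X ^ a` over the `p`-th roots of unity when `p ∣ a`. -/
lemma prod_comp_one_sub_dvd {p a : ℕ} (hp : 0 < p) (h : p ∣ a) :
    ∏ ζ ∈ nthRootsFinset p (1 : K[X]), (1 - X ^ a : K[X]).comp (ζ * X) =
      (1 - X ^ a) ^ (nthRootsFinset p (1 : K[X])).card := by
  rw [← Finset.prod_const]
  refine Finset.prod_congr rfl fun ζ hζ => ?_
  rw [mem_nthRootsFinset hp] at hζ
  obtain ⟨c, rfl⟩ := h
  simp [mul_pow, pow_mul, hζ]

lemma prod_comp_one_sub_not_dvd {p a : ℕ} (hp : p.Prime) {ζ₀ : K[X]} (hζ₀ : IsPrimitiveRoot ζ₀ p)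
    (h : ¬ p ∣ a) :
    ∏ ζ ∈ nthRootsFinset p (1 : K[X]), (1 - X ^ a : K[X]).comp (ζ * X) = 1 - X ^ (p * a) := by
  have h1 := hζ₀.pow_sub_pow_eq_prod_sub_mul 1 (X ^ a : K[X]) hp.pos
  rw [one_pow, ← pow_mul, mul_comm a p] at h1
  rw [h1]
  have hcop : p.Coprime a := (Nat.Prime.coprime_iff_not_dvd hp).mpr h
  have key : ∀ x : K[X], ∀ y : K[X], x ^ p = 1 → y ^ p = 1 → x ^ a = y ^ a → x = y := by
    intro x y hx hy hxy
    obtain ⟨m, -, hm⟩ := Nat.exists_mul_mod_eq_one_of_coprime hcop.symm hp.one_lt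
    have h2 : ∀ z : K[X], z ^ p = 1 → z = (z ^ a) ^ m := fun z hz => by
      rw [← pow_mul, ← Nat.div_add_mod (a * m) p, hm, pow_add, pow_mul, hz]; simp
    rw [h2 x hx, h2 y hy, hxy]
  have hinj : Set.InjOn (fun x : K[X] => x ^ a) (nthRootsFinset p (1 : K[X]) : Set K[X]) := by
    intro x hx y hy hxy
    rw [Finset.mem_coe, mem_nthRootsFinset hp.pos] at hx hy
    exact key x y hx hy hxy
  have hmaps : ∀ x ∈ nthRootsFinset p (1 : K[X]), x ^ a ∈ nthRootsFinset p (1 : K[X]) := by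
    intro x hx
    rw [mem_nthRootsFinset hp.pos] at hx ⊢
    rw [← pow_mul, mul_comm, pow_mul, hx, one_pow]
  refine Finset.prod_nbij (fun x => x ^ a) hmaps hinj ?_ ?_
  · exact Finset.surjOn_of_injOn_of_card_le _ hmaps hinj le_rfl
  · intro ζ _
    simp [mul_pow]

/-- If every root `β` of `P` satisfies `β ^ p = β ^ (2 ^ j)`, then the product of the `P(ζ X)` over
the `p`-th roots of unity `ζ` is `P(X ^ p)`, because Frobenius permutes the roots of `P`. -/
lemma prod_comp_eq_expand [IsAlgClosed K] [CharP K 2] [Algebra (ZMod 2) K]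
    {P : (ZMod 2)[X]} (hP : P.Monic) {p j : ℕ} (hp : 0 < p) {ζ₀ : K[X]} (hζ₀ : IsPrimitiveRoot ζ₀ p)
    (hroot : ∀ β ∈ (P.map (algebraMap (ZMod 2) K)).roots, β ^ p = β ^ 2 ^ j) :
    ∏ ζ ∈ nthRootsFinset p (1 : K[X]), (P.map (algebraMap (ZMod 2) K)).comp (ζ * X) =
      (P.map (algebraMap (ZMod 2) K)).comp (X ^ p) := by
  set Q := P.map (algebraMap (ZMod 2) K) with hQ
  have hQ1 : Q = (Q.roots.map (fun x => C x - X)).prod := by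
    have h := (IsAlgClosed.splits Q).eq_prod_roots
    rw [(hP.map _).leadingCoeff, C_1, one_mul] at h
    conv_lhs => rw [h]
    congr 1
    refine Multiset.map_congr rfl fun x _ => ?_
    have : (2 : K[X]) = 0 := CharTwo.two_eq_zero
    linear_combination (X - C x) * this
  have hQ2 : Q = (Q.roots.map (fun x => C (x ^ p) - X)).prod := by
    have : ExpChar K 2 := ExpChar.prime Nat.prime_two
    have h1 : Q.map (iterateFrobenius K 2 j) = Q := by
      rw [hQ, Polynomial.map_map]
      congr 1
      exact Subsingleton.elim _ _
    conv_lhs => rw [← h1, hQ1]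
    rw [Polynomial.map_multiset_prod, Multiset.map_map]
    congr 1
    refine Multiset.map_congr rfl fun x hx => ?_
    simp [iterateFrobenius_def, hroot x hx]
  have e1 : ∀ ζ : K[X], Q.comp (ζ * X) = (Q.roots.map (fun x => C x - ζ * X)).prod := by
    intro ζ
    conv_lhs => rw [hQ1]
    rw [multiset_prod_comp, Multiset.map_map]
    simp
  have e2 : Q.comp (X ^ p) = (Q.roots.map (fun x => C x ^ p - X ^ p)).prod := by
    conv_lhs => rw [hQ2]
    rw [multiset_prod_comp, Multiset.map_map]
    simp
  simp_rw [e1]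
  rw [e2, ← Multiset.prod_map_prod]
  congr 1
  refine Multiset.map_congr rfl fun x _ => ?_
  rw [hζ₀.pow_sub_pow_eq_prod_sub_mul _ _ hp]

end Norm

/-- No element of `A` is divisible by an odd prime congruent to a power of `2` modulo `q`. -/
theorem not_dvd_of_mem {P : (ZMod 2)[X]} (hP : P.coeff 0 = 1) {A : Set ℕ} (hA : ∀ a ∈ A, 0 < a)
    (hpar : ∀ n : ℕ, (partitionCount A n : ZMod 2) = P.coeff n)
    {p j : ℕ} (hp : p.Prime) (hp2 : p ≠ 2) (hpj : (p : ZMod (qOf P)) = 2 ^ j)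
    {a : ℕ} (ha : a ∈ A) : ¬ p ∣ a := by
  classical
  by_contra hpa
  -- `a₀` is the least multiple of `p` in `A`
  have hex : ∃ a, a ∈ A ∧ p ∣ a := ⟨a, ha, hpa⟩
  obtain ⟨a₀, ⟨ha₀, hpa₀⟩, hmin⟩ : ∃ a₀, (a₀ ∈ A ∧ p ∣ a₀) ∧ ∀ b < a₀, ¬ (b ∈ A ∧ p ∣ b) :=
    ⟨Nat.find hex, Nat.find_spec hex, fun b hb => Nat.find_min hex hb⟩
  have ha₀pos := hA a₀ ha₀
  let K := AlgebraicClosure (ZMod 2)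
  have : CharP K 2 := charP_of_injective_algebraMap (algebraMap (ZMod 2) K).injective 2
  have hpodd : Odd p := hp.odd_of_ne_two hp2
  have hpK : (p : K) = 1 := by
    obtain ⟨k, rfl⟩ := hpodd
    have : ((2 * k : ℕ) : K) = 0 := (CharP.cast_eq_zero_iff K 2 _).2 (dvd_mul_right _ _)
    rw [Nat.cast_add, this, zero_add, Nat.cast_one]
  have : NeZero (p : K) := ⟨by rw [hpK]; exact one_ne_zero⟩
  obtain ⟨ζ, hζ⟩ := HasEnoughRootsOfUnity.exists_primitiveRoot K p
  have hζ₀ : IsPrimitiveRoot (C ζ) p := hζ.map_of_injective C_injective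
  set φ := algebraMap (ZMod 2) K
  set Q := P.map φ with hQ
  have hmonic := monic_of_coeff_zero hP
  have hroot : ∀ β ∈ Q.roots, β ^ p = β ^ 2 ^ j := by
    intro β hβ
    have hβ0 : aeval β P = 0 := by
      have := (mem_roots'.mp hβ).2
      rwa [hQ, IsRoot.def, eval_map_algebraMap] at this
    have hbint : IsIntegral (ZMod 2) β := ⟨P, hmonic, by simpa [aeval_def] using hβ0⟩
    have hd := (qOf_mem hP).2 (minpoly (ZMod 2) β) (minpoly.irreducible hbint)
      (minpoly.dvd _ _ hβ0)
    have hq : β ^ qOf P = 1 := by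
      have := (minpoly.dvd_iff).mp hd
      simpa [sub_eq_zero] using this
    have h1 : p ≡ 2 ^ j [MOD qOf P] := by
      rw [← ZMod.natCast_eq_natCast_iff, hpj]; push_cast; rfl
    rw [← Nat.div_add_mod p (qOf P), ← Nat.div_add_mod (2 ^ j) (qOf P), pow_add, pow_add, pow_mul,
      pow_mul, hq, h1]
    simp
  set T := nthRootsFinset p (1 : K[X]) with hT
  have hTcard : T.card = p := hζ₀.card_nthRootsFinset
  set D : ℕ → K[X] := fun i => if i + 1 ∈ A then 1 - X ^ (i + 1) else 1 with hD
  set S := Finset.range a₀ with hS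
  have hcong : (X : K[X]) ^ (a₀ + 1) ∣ Q * ∏ i ∈ S, D i - 1 := by
    have h := parity_congr hpar a₀
    have h2 := Polynomial.map_dvd φ h
    simp only [Polynomial.map_sub, Polynomial.map_mul, Polynomial.map_pow, map_X,
      Polynomial.map_one, Polynomial.map_prod] at h2
    convert h2 using 4 with i hi
    simp only [hD]
    split_ifs <;> simp
  let R := K[X] ⧸ Ideal.span {(X : K[X]) ^ (a₀ + 1)}
  let mk : K[X] →+* R := Ideal.Quotient.mk _
  have hmk : ∀ f g : K[X], mk f = mk g ↔ X ^ (a₀ + 1) ∣ f - g := by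
    intro f g
    rw [Ideal.Quotient.mk_eq_mk_iff_sub_mem, Ideal.mem_span_singleton]
  have hcomp : ∀ g : K[X], X ∣ g → mk ((Q.comp g) * ∏ i ∈ S, (D i).comp g) = 1 := by
    intro g hg
    rw [← map_one mk, hmk]
    obtain ⟨H, hH⟩ := hcong
    have := congrArg (fun f => f.comp g) hH
    simp only [sub_comp, mul_comp, one_comp, pow_comp, X_comp, Polynomial.prod_comp] at this
    rw [this]
    exact (pow_dvd_pow_of_dvd hg _).mul_right _
  have h1 := hcomp (X ^ p) (dvd_pow_self X hp.ne_zero)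
  have h2 : mk (Q.comp (X ^ p) * ∏ i ∈ S, ∏ ζ ∈ T, (D i).comp (ζ * X)) = 1 := by
    rw [hQ, ← prod_comp_eq_expand hmonic hp.pos hζ₀ hroot, Finset.prod_comm,
      ← Finset.prod_mul_distrib, map_prod]
    exact Finset.prod_eq_one fun ζ _ => hcomp _ (dvd_mul_left _ _)
  obtain ⟨m, rfl⟩ : ∃ m, a₀ = m + 1 := ⟨a₀ - 1, by lia⟩
  rw [hS, Finset.prod_range_succ] at h1 h2
  -- all factors but the last agree, by minimality of `a₀`
  have hagree : ∏ i ∈ Finset.range m, ∏ ζ ∈ T, (D i).comp (ζ * X) =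
      ∏ i ∈ Finset.range m, (D i).comp (X ^ p) := by
    refine Finset.prod_congr rfl fun i hi => ?_
    simp only [hD]
    split_ifs with hiA
    · rw [prod_comp_one_sub_not_dvd hp hζ₀]
      · simp [pow_mul]
      · intro hdiv
        exact hmin (i + 1) (by simpa using hi) ⟨hiA, hdiv⟩
    · simp
  rw [hagree, ← mul_assoc, map_mul] at h2
  rw [← mul_assoc, map_mul] at h1
  have hu : IsUnit (mk (Q.comp (X ^ p) * ∏ i ∈ Finset.range m, (D i).comp (X ^ p))) :=
    IsUnit.of_mul_eq_one _ h1
  have h3 := hu.mul_left_cancel (h2.trans h1.symm)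
  simp only [hD, if_pos ha₀] at h3
  rw [prod_comp_one_sub_dvd hp.pos hpa₀, ← hT, hTcard, hmk, X_pow_dvd_iff] at h3
  have h4 := h3 (m + 1) (by lia)
  have h5 : ((1 - X ^ (m + 1) : K[X]) ^ p).coeff (m + 1) = -1 := by
    have : ((1 - X ^ (m + 1) : K[X]) ^ p) = expand K (m + 1) ((1 - X) ^ p) := by simp
    rw [this]
    have h6 := coeff_expand_mul (R := K) (p := m + 1) (by lia) ((1 - X) ^ p) 1
    rw [one_mul] at h6
    rw [h6]
    have h7 : ((1 - X : K[X]) ^ p) = ((-1 : K[X]) ^ p) * (X - 1) ^ p := by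
      rw [← mul_pow]; ring
    have h8 : (X - 1 : K[X]) = X + C (-1) := by simp [sub_eq_add_neg]
    rw [h7, hpodd.neg_one_pow, h8, neg_one_mul, coeff_neg, coeff_X_add_C_pow]
    rw [Nat.choose_one_right, hpK, Even.neg_one_pow]
    · simp
    · exact Nat.Odd.sub_odd hpodd odd_one
  have h6 : ((1 - X ^ (m + 1) : K[X]).comp (X ^ p)).coeff (m + 1) = 0 := by
    simp only [sub_comp, one_comp, pow_comp, X_comp, ← pow_mul, coeff_sub, coeff_one, coeff_X_pow]
    have hne : m + 1 ≠ p * (m + 1) := by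
      have := hp.two_le
      nlinarith
    simp [hne]
  rw [coeff_sub, h5, h6] at h4
  simp at h4

/-! ### Dirichlet series of completely multiplicative functions -/

section Analytic

open Filter Topology

/-- The summand `n ↦ φ n * n ^ (-σ)` of the Dirichlet series of a completely multiplicative
function `φ` at a real point `σ > 1`. -/
noncomputable def twist (φ : ℕ →* ℂ) (σ : ℝ) (hσ : 1 < σ) : ℕ →*₀ ℂ where
  toFun n := φ n * (((n : ℝ) ^ (-σ) : ℝ) : ℂ)
  map_zero' := by
    have : -σ ≠ 0 := by linarith
    simp [Real.zero_rpow this]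
  map_one' := by simp
  map_mul' m n := by
    rw [map_mul, Nat.cast_mul, Real.mul_rpow (by positivity) (by positivity)]
    push_cast
    ring

/-- The Dirichlet series `∑ φ(n) n ^ (-σ)`. -/
noncomputable def dser (φ : ℕ →* ℂ) (σ : ℝ) : ℂ := ∑' n : ℕ, φ n * (((n : ℝ) ^ (-σ) : ℝ) : ℂ)

/-- The real part of the prime sum `∑ φ(p) p ^ (-σ)`. -/
noncomputable def psum (φ : ℕ →* ℂ) (σ : ℝ) : ℝ :=
  ∑' p : Nat.Primes, (φ p).re * ((p : ℕ) : ℝ) ^ (-σ)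

/-- The zeta series `∑ n ^ (-σ)`. -/
noncomputable def zser (σ : ℝ) : ℝ := ∑' n : ℕ, (n : ℝ) ^ (-σ)

/-- An absolute bound for the contribution of the higher prime powers to the logarithm of an Euler
product. -/
noncomputable def K₀ : ℝ := ∑' n : ℕ, (n : ℝ) ^ (-2 : ℝ)

lemma K₀_nonneg : 0 ≤ K₀ := tsum_nonneg fun n => by positivity

lemma summable_rpow_neg {σ : ℝ} (hσ : 1 < σ) : Summable fun n : ℕ => (n : ℝ) ^ (-σ) :=
  Real.summable_nat_rpow.mpr (by linarith)

lemma norm_term_le {φ : ℕ →* ℂ} (hφ : ∀ n, ‖φ n‖ ≤ 1) (σ : ℝ) (n : ℕ) :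
    ‖φ n * (((n : ℝ) ^ (-σ) : ℝ) : ℂ)‖ ≤ (n : ℝ) ^ (-σ) := by
  have h : (0 : ℝ) ≤ (n : ℝ) ^ (-σ) := by positivity
  rw [norm_mul, Complex.norm_real, Real.norm_of_nonneg h]
  exact mul_le_of_le_one_left h (hφ n)

lemma summable_norm_term {φ : ℕ →* ℂ} (hφ : ∀ n, ‖φ n‖ ≤ 1) {σ : ℝ} (hσ : 1 < σ) :
    Summable fun n : ℕ => ‖φ n * (((n : ℝ) ^ (-σ) : ℝ) : ℂ)‖ :=
  Summable.of_nonneg_of_le (fun _ => norm_nonneg _) (norm_term_le hφ σ) (summable_rpow_neg hσ)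

lemma summable_prime_rpow {σ : ℝ} (hσ : 1 < σ) :
    Summable fun p : Nat.Primes => ((p : ℕ) : ℝ) ^ (-σ) :=
  (summable_rpow_neg hσ).subtype Nat.Prime

lemma summable_psum {φ : ℕ →* ℂ} (hφ : ∀ n, ‖φ n‖ ≤ 1) {σ : ℝ} (hσ : 1 < σ) :
    Summable fun p : Nat.Primes => (φ p).re * ((p : ℕ) : ℝ) ^ (-σ) := by
  refine Summable.of_norm_bounded (summable_prime_rpow hσ) fun p => ?_
  have h : (0 : ℝ) ≤ ((p : ℕ) : ℝ) ^ (-σ) := by positivity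
  rw [norm_mul, Real.norm_of_nonneg h]
  exact mul_le_of_le_one_left h ((Complex.abs_re_le_norm _).trans (hφ p))

lemma norm_log_sub_le {z : ℂ} (hz : ‖z‖ ≤ 1 / 2) : ‖-Complex.log (1 - z) - z‖ ≤ ‖z‖ ^ 2 := by
  have h := Complex.norm_log_one_add_sub_self_le (z := -z) (by rw [norm_neg]; linarith)
  rw [norm_neg] at h
  have h2 : ‖-Complex.log (1 - z) - z‖ = ‖Complex.log (1 + -z) - -z‖ := by
    rw [← norm_neg]; congr 1; ring_nf
  rw [h2]
  refine h.trans ?_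
  have h3 : (1 - ‖z‖)⁻¹ ≤ 2 := by
    rw [inv_le_comm₀ (by linarith) (by norm_num)]
    linarith
  nlinarith [sq_nonneg ‖z‖]

/-- The logarithm of the Dirichlet series is the prime sum up to a bounded error. -/
lemma log_dser {φ : ℕ →* ℂ} (hφ : ∀ n, ‖φ n‖ ≤ 1) {σ : ℝ} (hσ : 1 < σ) :
    dser φ σ ≠ 0 ∧ |Real.log ‖dser φ σ‖ - psum φ σ| ≤ K₀ := by
  have hsum : Summable fun n => ‖twist φ σ hσ n‖ := summable_norm_term hφ hσ
  have hE := EulerProduct.exp_tsum_primes_log_eq_tsum hsum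
  have hE' : Complex.exp (∑' p : Nat.Primes, -Complex.log (1 - twist φ σ hσ p)) = dser φ σ := hE
  refine ⟨hE' ▸ Complex.exp_ne_zero _, ?_⟩
  rw [← hE', Complex.norm_exp, Real.log_exp]
  have hs1 : Summable fun p : Nat.Primes => -Complex.log (1 - twist φ σ hσ p) :=
    (hsum.of_norm.clog_one_sub.neg).subtype Nat.Prime
  have hs2 : Summable fun p : Nat.Primes => twist φ σ hσ p := hsum.of_norm.subtype Nat.Prime
  have h3 : psum φ σ = (∑' p : Nat.Primes, twist φ σ hσ p).re := by
    rw [Complex.re_tsum hs2, psum]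
    refine tsum_congr fun p => ?_
    change _ = (φ p * (((p : ℝ) ^ (-σ) : ℝ) : ℂ)).re
    simp
  rw [h3, ← Complex.sub_re, ← hs1.tsum_sub hs2]
  refine (Complex.abs_re_le_norm _).trans ?_
  have hb : ∀ p : Nat.Primes, ‖-Complex.log (1 - twist φ σ hσ p) - twist φ σ hσ p‖ ≤
      ((p : ℕ) : ℝ) ^ (-2 : ℝ) := by
    intro p
    have hp2 : (2 : ℝ) ≤ ((p : ℕ) : ℝ) := by exact_mod_cast p.2.two_le
    have h4 : ‖twist φ σ hσ p‖ ≤ ((p : ℕ) : ℝ) ^ (-1 : ℝ) :=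
      (norm_term_le hφ σ p).trans (Real.rpow_le_rpow_of_exponent_le (by linarith) (by linarith))
    have h5 : ((p : ℕ) : ℝ) ^ (-1 : ℝ) ≤ 1 / 2 := by
      rw [Real.rpow_neg_one, one_div]
      exact inv_anti₀ (by norm_num) hp2
    refine (norm_log_sub_le (h4.trans h5)).trans ?_
    have h6 : ((p : ℕ) : ℝ) ^ (-2 : ℝ) = (((p : ℕ) : ℝ) ^ (-1 : ℝ)) ^ 2 := by
      rw [← Real.rpow_natCast, ← Real.rpow_mul (by positivity)]; norm_num
    rw [h6]
    gcongr
  have hsK := summable_rpow_neg (σ := 2) (by norm_num)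
  refine (tsum_of_norm_bounded (hsK.subtype Nat.Prime).hasSum hb).trans ?_
  exact hsK.tsum_subtype_le _ Nat.Prime (fun n => by positivity)

/-- The tangent-line inequality for the convex function `t ↦ t ^ (-s)`. -/
lemma rpow_neg_tangent {a b s : ℝ} (ha : 0 < a) (hb : 0 < b) (hs : 0 ≤ s) :
    s * (b - a) * b ^ (-(s + 1)) ≤ a ^ (-s) - b ^ (-s) := by
  have h1 : a ^ (-s) = b ^ (-s) * (a / b) ^ (-s) := by
    rw [← Real.mul_rpow hb.le (by positivity), mul_div_cancel₀ _ hb.ne']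
  have h2 : 1 - s * (a / b - 1) ≤ (a / b) ^ (-s) := by
    rw [Real.rpow_def_of_pos (by positivity)]
    have h3 := Real.add_one_le_exp (Real.log (a / b) * -s)
    have h4 := Real.log_le_sub_one_of_pos (show 0 < a / b by positivity)
    nlinarith
  have h3 : b ^ (-(s + 1)) = b ^ (-s) * b⁻¹ := by
    rw [neg_add, Real.rpow_add hb, Real.rpow_neg_one]
  rw [h1, h3]
  have h5 : s * (b - a) * (b ^ (-s) * b⁻¹) = b ^ (-s) * (1 - s * (a / b - 1)) - b ^ (-s) := by
    field_simp
    ring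
  rw [h5]
  have : 0 < b ^ (-s) := by positivity
  nlinarith

lemma zser_eq {σ : ℝ} (hσ : 1 < σ) : zser σ = ∑' n : ℕ, ((n + 1 : ℕ) : ℝ) ^ (-σ) := by
  rw [zser, (summable_rpow_neg hσ).tsum_eq_zero_add]
  simp [Real.zero_rpow (show -σ ≠ 0 by linarith)]

lemma zser_bounds {σ : ℝ} (hσ : 1 < σ) :
    1 / (σ - 1) ≤ zser σ ∧ zser σ ≤ 1 + 1 / (σ - 1) := by
  have hs : 0 < σ - 1 := by linarith
  set g : ℕ → ℝ := fun n => ((n + 1 : ℕ) : ℝ) ^ (-(σ - 1)) with hg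
  have hsum : Summable fun n : ℕ => ((n + 1 : ℕ) : ℝ) ^ (-σ) :=
    (summable_nat_add_iff 1).mpr (summable_rpow_neg hσ)
  have e : σ - 1 + 1 = σ := by ring
  have hlow : ∀ n, g n - g (n + 1) ≤ (σ - 1) * ((n + 1 : ℕ) : ℝ) ^ (-σ) := by
    intro n
    have := rpow_neg_tangent (a := ((n + 1 + 1 : ℕ) : ℝ)) (b := ((n + 1 : ℕ) : ℝ)) (s := σ - 1)
      (by positivity) (by positivity) hs.le
    rw [e] at this
    simp only [hg]
    push_cast at this ⊢
    linarith
  have hup : ∀ n, (σ - 1) * ((n + 1 + 1 : ℕ) : ℝ) ^ (-σ) ≤ g n - g (n + 1) := by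
    intro n
    have := rpow_neg_tangent (a := ((n + 1 : ℕ) : ℝ)) (b := ((n + 1 + 1 : ℕ) : ℝ)) (s := σ - 1)
      (by positivity) (by positivity) hs.le
    rw [e] at this
    simp only [hg]
    push_cast at this ⊢
    linarith
  have hg0 : g 0 = 1 := by simp [hg]
  have hgpos : ∀ n, 0 ≤ g n := fun n => by positivity
  have hlim : Tendsto g atTop (𝓝 0) :=
    ((tendsto_rpow_neg_atTop hs).comp tendsto_natCast_atTop_atTop).comp (tendsto_add_atTop_nat 1)
  rw [zser_eq hσ]
  constructor
  · rw [div_le_iff₀ hs]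
    have h1 : Tendsto (fun n => 1 - g n) atTop (𝓝 (1 - 0)) := hlim.const_sub 1
    rw [sub_zero] at h1
    refine le_of_tendsto' h1 fun n => ?_
    have h2 : 1 - g n = ∑ i ∈ Finset.range n, (g i - g (i + 1)) := by
      rw [Finset.sum_range_sub', hg0]
    rw [h2, mul_comm, ← tsum_mul_left]
    refine (Finset.sum_le_sum fun i _ => hlow i).trans ?_
    exact (hsum.mul_left _).sum_le_tsum _ (fun i _ => by positivity)
  · rw [hsum.tsum_eq_zero_add]
    simp only [zero_add, Nat.cast_one, Real.one_rpow, add_le_add_iff_left]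
    rw [le_div_iff₀ hs, mul_comm, ← tsum_mul_left]
    refine Real.tsum_le_of_sum_range_le (fun n => by positivity) fun n => ?_
    refine (Finset.sum_le_sum fun i _ => hup i).trans ?_
    rw [Finset.sum_range_sub', hg0]
    linarith [hgpos n]

lemma zser_le {σ : ℝ} (hσ : 1 < σ) (hσ2 : σ ≤ 2) : zser σ ≤ 2 / (σ - 1) := by
  refine (zser_bounds hσ).2.trans ?_
  have hs : 0 < σ - 1 := by linarith
  rw [le_div_iff₀ hs, add_mul, one_div, inv_mul_cancel₀ hs.ne']
  linarith

lemma zser_pos {σ : ℝ} (hσ : 1 < σ) : 0 < zser σ :=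
  lt_of_lt_of_le (by have : 0 < σ - 1 := by linarith
                     positivity) (zser_bounds hσ).1

lemma dser_one (σ : ℝ) : dser 1 σ = (zser σ : ℂ) := by
  simp only [dser, zser, MonoidHom.one_apply, one_mul, Complex.ofReal_tsum]

lemma psum_one (σ : ℝ) : psum 1 σ = ∑' p : Nat.Primes, ((p : ℕ) : ℝ) ^ (-σ) := by
  simp [psum]

lemma log_zser {σ : ℝ} (hσ : 1 < σ) : |Real.log (zser σ) - psum 1 σ| ≤ K₀ := by
  have h := (log_dser (φ := 1) (by simp) hσ).2
  rwa [dser_one, Complex.norm_real, Real.norm_of_nonneg (zser_pos hσ).le] at h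

/-- The trivial lower bound `‖D(σ)‖ ≫ 1 / ζ(σ)`. -/
lemma norm_dser_ge {φ : ℕ →* ℂ} (hφ : ∀ n, ‖φ n‖ ≤ 1) {σ : ℝ} (hσ : 1 < σ) (hσ2 : σ ≤ 2) :
    Real.exp (-2 * K₀) * ((σ - 1) / 2) ≤ ‖dser φ σ‖ := by
  have h1 := log_dser hφ hσ
  have h2 := log_zser hσ
  have h3 : -psum 1 σ ≤ psum φ σ := by
    rw [psum_one, psum, ← tsum_neg]
    refine Summable.tsum_le_tsum (fun p => ?_) (summable_prime_rpow hσ).neg (summable_psum hφ hσ)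
    have h : (0 : ℝ) ≤ ((p : ℕ) : ℝ) ^ (-σ) := by positivity
    have h5 := (abs_le.mp ((Complex.abs_re_le_norm _).trans (hφ p))).1
    nlinarith
  have h4 : Real.log (zser σ) ≤ Real.log (2 / (σ - 1)) :=
    Real.log_le_log (zser_pos hσ) (zser_le hσ hσ2)
  have hs : 0 < σ - 1 := by linarith
  rw [← Real.exp_log (norm_pos_iff.mpr h1.1), ← Real.exp_log (show 0 < (σ - 1) / 2 by positivity),
    ← Real.exp_add]
  refine Real.exp_le_exp.mpr ?_
  have h6 : Real.log ((σ - 1) / 2) = - Real.log (2 / (σ - 1)) := by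
    rw [← Real.log_inv, inv_div]
  rw [h6]
  linarith [(abs_le.mp h1.2).1, (abs_le.mp h2).1, (abs_le.mp h1.2).2, (abs_le.mp h2).2]

end Analytic

/-! ### Lower bounds for `L`-functions to the right of `1` -/

section Characters

open Filter Topology

/-- A Dirichlet character as a completely multiplicative function on `ℕ`. -/
noncomputable def cfun {q : ℕ} (χ : DirichletCharacter ℂ q) : ℕ →* ℂ :=
  χ.toMonoidHom.comp (Nat.castRingHom (ZMod q)).toMonoidHom

lemma cfun_apply {q : ℕ} (χ : DirichletCharacter ℂ q) (n : ℕ) : cfun χ n = χ (n : ZMod q) := rfl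

lemma norm_cfun_le {q : ℕ} (χ : DirichletCharacter ℂ q) (n : ℕ) : ‖cfun χ n‖ ≤ 1 :=
  χ.norm_le_one _

variable {q : ℕ} [NeZero q]

lemma sum_range_zmod (f : ZMod q → ℂ) : ∑ i ∈ Finset.range q, f (i : ZMod q) = ∑ a, f a := by
  refine Finset.sum_nbij (fun i => (i : ZMod q)) (fun _ _ => Finset.mem_univ _) ?_ ?_
    (fun _ _ => rfl)
  · intro i hi j hj hij
    simp only [Finset.coe_range, Set.mem_Iio] at hi hj
    have := (ZMod.natCast_eq_natCast_iff' i j q).mp hij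
    rwa [Nat.mod_eq_of_lt hi, Nat.mod_eq_of_lt hj] at this
  · intro a _
    exact ⟨a.val, by simpa using ZMod.val_lt a, by simp⟩

lemma sum_char_period {χ : DirichletCharacter ℂ q} (hχ : χ ≠ 1) (k : ℕ) :
    ∑ i ∈ Finset.range q, cfun χ (i + k) = 0 := by
  have h := sum_range_zmod (q := q) (fun a => χ (a + (k : ZMod q)))
  simp only [cfun_apply, Nat.cast_add]
  have h2 := Equiv.sum_comp (Equiv.addRight (k : ZMod q)) (fun a => χ a)
  simp only [Equiv.coe_addRight] at h2
  rw [h, h2]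
  exact MulChar.sum_eq_zero_of_ne_one hχ

lemma norm_sum_char_le {χ : DirichletCharacter ℂ q} (hχ : χ ≠ 1) (k n : ℕ) :
    ‖∑ i ∈ Finset.range n, cfun χ (i + k)‖ ≤ q := by
  induction n using Nat.strong_induction_on with
  | _ n ih =>
    rcases lt_or_ge n q with h | h
    · refine (norm_sum_le_of_le _ fun i _ => norm_cfun_le χ (i + k)).trans ?_
      simpa using h.le
    · obtain ⟨m, rfl⟩ := Nat.exists_eq_add_of_le h
      rw [Finset.sum_range_add, sum_char_period hχ, zero_add]
      have h1 : ∀ i, cfun χ (q + i + k) = cfun χ (i + k) := by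
        intro i
        simp [cfun_apply]
      simp only [h1]
      exact ih m (by have := NeZero.pos q; omega)

/-- Abel summation against a nonnegative antitone weight. -/
lemma norm_sum_mul_le {a : ℕ → ℂ} {B : ℝ} (hB : ∀ n, ‖∑ i ∈ Finset.range n, a i‖ ≤ B)
    {g : ℕ → ℝ} (hg : Antitone g) (hg0 : ∀ n, 0 ≤ g n) (n : ℕ) :
    ‖∑ i ∈ Finset.range n, a i * (g i : ℂ)‖ ≤ B * g 0 := by
  have h1 : ∀ n, ∑ i ∈ Finset.range n, a i * (g i : ℂ) =
      (∑ i ∈ Finset.range n, a i) * (g n : ℂ) +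
        ∑ i ∈ Finset.range n, (∑ j ∈ Finset.range (i + 1), a j) * ((g i - g (i + 1) : ℝ) : ℂ) := by
    intro n
    induction n with
    | zero => simp
    | succ n ih =>
      rw [Finset.sum_range_succ, ih, Finset.sum_range_succ (fun i => (∑ j ∈ Finset.range (i + 1), a j) *
        ((g i - g (i + 1) : ℝ) : ℂ)) n, Finset.sum_range_succ a n]
      push_cast
      ring
  rw [h1]
  have h2 : ‖(∑ i ∈ Finset.range n, a i) * (g n : ℂ)‖ ≤ B * g n := by
    rw [norm_mul, Complex.norm_real, Real.norm_of_nonneg (hg0 n)]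
    exact mul_le_mul_of_nonneg_right (hB n) (hg0 n)
  have h3 : ‖∑ i ∈ Finset.range n, (∑ j ∈ Finset.range (i + 1), a j) *
      ((g i - g (i + 1) : ℝ) : ℂ)‖ ≤ ∑ i ∈ Finset.range n, B * (g i - g (i + 1)) := by
    refine norm_sum_le_of_le _ fun i _ => ?_
    have h4 : 0 ≤ g i - g (i + 1) := sub_nonneg.mpr (hg (Nat.le_succ i))
    rw [norm_mul, Complex.norm_real, Real.norm_of_nonneg h4]
    exact mul_le_mul_of_nonneg_right (hB _) h4
  rw [← Finset.mul_sum, Finset.sum_range_sub'] at h3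
  refine (norm_add_le _ _).trans ((add_le_add h2 h3).trans (le_of_eq (by ring)))

lemma tendsto_dser {φ : ℕ →* ℂ} (hφ : ∀ n, ‖φ n‖ ≤ 1) {σ : ℝ} (hσ : 1 < σ) :
    Tendsto (fun n => ∑ i ∈ Finset.range n, φ i * (((i : ℝ) ^ (-σ) : ℝ) : ℂ)) atTop
      (𝓝 (dser φ σ)) :=
  (summable_norm_term hφ hσ).of_norm.hasSum.tendsto_sum_nat

/-- Abel summation bounds a nontrivial `L(σ, χ)` by the trivial bound `q` for its character sums. -/
lemma norm_dser_le {χ : DirichletCharacter ℂ q} (hχ : χ ≠ 1) {σ : ℝ} (hσ : 1 < σ) :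
    ‖dser (cfun χ) σ‖ ≤ q := by
  refine le_of_tendsto ((tendsto_dser (norm_cfun_le χ) hσ).comp (tendsto_add_atTop_nat 1)).norm
    (Eventually.of_forall fun n => ?_)
  simp only [Function.comp_apply]
  rw [Finset.sum_range_succ']
  have h0 : ((0 : ℕ) : ℝ) ^ (-σ) = 0 := by
    simp [Real.zero_rpow (show -σ ≠ 0 by linarith)]
  rw [h0, Complex.ofReal_zero, mul_zero, add_zero]
  have h := norm_sum_mul_le (fun n => norm_sum_char_le hχ 1 n)
    (g := fun i => ((i + 1 : ℕ) : ℝ) ^ (-σ)) ?_ (fun n => by positivity) n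
  · simpa using h
  · intro i j hij
    exact Real.rpow_le_rpow_of_nonpos (by positivity) (by exact_mod_cast Nat.succ_le_succ hij)
      (by linarith)

lemma rpow_neg_sub_le {σ σ' t : ℝ} (h1 : 1 ≤ σ) (h2 : σ ≤ σ') (ht : 1 ≤ t) :
    t ^ (-σ) - t ^ (-σ') ≤ σ' - σ := by
  have ht0 : 0 < t := by linarith
  have h3 : t ^ (-σ') = t ^ (-σ) * t ^ (-(σ' - σ)) := by
    rw [← Real.rpow_add ht0]; congr 1; ring
  have h4 : 1 - (σ' - σ) * (t - 1) ≤ t ^ (-(σ' - σ)) := by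
    rw [Real.rpow_def_of_pos ht0]
    have h5 := Real.add_one_le_exp (Real.log t * -(σ' - σ))
    have h6 := Real.log_le_sub_one_of_pos ht0
    nlinarith
  have h7 : t ^ (-σ) ≤ t⁻¹ := by
    rw [← Real.rpow_neg_one]
    exact Real.rpow_le_rpow_of_exponent_le ht (by linarith)
  have h8 : t ^ (-σ) * t ≤ 1 := by
    calc t ^ (-σ) * t ≤ t⁻¹ * t := by gcongr
      _ = 1 := inv_mul_cancel₀ ht0.ne'
  have h9 : 0 < t ^ (-σ) := by positivity
  rw [h3]
  have h10 : t ^ (-σ) * (1 - (σ' - σ) * (t - 1)) ≤ t ^ (-σ) * t ^ (-(σ' - σ)) := by gcongr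
  have h11 : (σ' - σ) * (t ^ (-σ) * (t - 1)) ≤ (σ' - σ) * 1 := by
    apply mul_le_mul_of_nonneg_left _ (by linarith)
    nlinarith
  nlinarith

lemma rpow_neg_sub_antitone {σ σ' : ℝ} (h1 : 1 ≤ σ) (h2 : σ ≤ σ') :
    AntitoneOn (fun t : ℝ => t ^ (-σ) - t ^ (-σ')) (Set.Ici 3) := by
  have hd : ∀ t : ℝ, 3 ≤ t → HasDerivAt (fun t : ℝ => t ^ (-σ) - t ^ (-σ'))
      (-σ * t ^ (-σ - 1) - -σ' * t ^ (-σ' - 1)) t := fun t ht =>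
    (Real.hasDerivAt_rpow_const (Or.inl (by linarith))).sub
      (Real.hasDerivAt_rpow_const (Or.inl (by linarith)))
  refine antitoneOn_of_deriv_nonpos (convex_Ici 3)
    (fun t ht => (hd t ht).continuousAt.continuousWithinAt)
    (fun t ht => ?_) (fun t ht => ?_)
  · exact (hd t (interior_subset ht)).differentiableAt.differentiableWithinAt
  · have ht3 : (3 : ℝ) ≤ t := interior_subset ht
    have ht0 : 0 < t := by linarith
    rw [(hd t ht3).deriv]
    have h3 : t ^ (-σ - 1) = t ^ (-σ' - 1) * t ^ (σ' - σ) := by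
      rw [← Real.rpow_add ht0]; congr 1; ring
    have h4 : 1 + (σ' - σ) ≤ t ^ (σ' - σ) := by
      rw [Real.rpow_def_of_pos ht0]
      have h5 := Real.add_one_le_exp (Real.log t * (σ' - σ))
      have h6 : 1 ≤ Real.log t := by
        rw [Real.le_log_iff_exp_le ht0]
        linarith [Real.exp_one_lt_three]
      nlinarith
    have h7 : 0 < t ^ (-σ' - 1) := by positivity
    rw [h3]
    have h8 : σ' ≤ σ * t ^ (σ' - σ) := by nlinarith
    nlinarith

/-- `L(σ, χ)` is Lipschitz in `σ ≥ 1`, uniformly in the length of the partial sums. -/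
lemma norm_sum_sub_le {χ : DirichletCharacter ℂ q} (hχ : χ ≠ 1) {σ σ' : ℝ} (h1 : 1 ≤ σ)
    (h2 : σ ≤ σ') (n : ℕ) :
    ‖∑ i ∈ Finset.range (n + 3), cfun χ i * (((i : ℝ) ^ (-σ) : ℝ) : ℂ) -
      ∑ i ∈ Finset.range (n + 3), cfun χ i * (((i : ℝ) ^ (-σ') : ℝ) : ℂ)‖ ≤
      2 * q * (σ' - σ) := by
  rw [← Finset.sum_sub_distrib]
  simp only [← mul_sub, ← Complex.ofReal_sub]
  rw [add_comm n 3, Finset.sum_range_add]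
  have hq : (1 : ℝ) ≤ q := by exact_mod_cast NeZero.one_le
  have hA : ‖∑ i ∈ Finset.range 3, cfun χ i * (((i : ℝ) ^ (-σ) - (i : ℝ) ^ (-σ') : ℝ) : ℂ)‖ ≤
      σ' - σ := by
    have e0 : (0 : ℝ) ^ (-σ) = 0 := Real.zero_rpow (by linarith)
    have e1 : (0 : ℝ) ^ (-σ') = 0 := Real.zero_rpow (by linarith)
    simp only [Finset.sum_range_succ, Finset.sum_range_zero]
    push_cast
    simp only [e0, e1, Real.one_rpow]
    have h4 : (0 : ℝ) ≤ (2 : ℝ) ^ (-σ) - 2 ^ (-σ') :=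
      sub_nonneg.mpr (Real.rpow_le_rpow_of_exponent_le (by norm_num) (by linarith))
    have h5 := rpow_neg_sub_le h1 h2 (show (1 : ℝ) ≤ 2 by norm_num)
    have h6 : ‖cfun χ 2 * (((2 : ℝ) ^ (-σ) - 2 ^ (-σ') : ℝ) : ℂ)‖ ≤ σ' - σ := by
      rw [norm_mul, Complex.norm_real, Real.norm_of_nonneg h4]
      exact (mul_le_of_le_one_left h4 (norm_cfun_le χ 2)).trans h5
    simpa using h6
  have hB : ‖∑ i ∈ Finset.range n, cfun χ (3 + i) *
      ((((3 + i : ℕ) : ℝ) ^ (-σ) - ((3 + i : ℕ) : ℝ) ^ (-σ') : ℝ) : ℂ)‖ ≤ q * (σ' - σ) := by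
    have h := norm_sum_mul_le (fun n => norm_sum_char_le hχ 3 n)
      (g := fun i => ((i + 3 : ℕ) : ℝ) ^ (-σ) - ((i + 3 : ℕ) : ℝ) ^ (-σ')) ?_ ?_ n
    · simp only [add_comm 3]
      refine h.trans ?_
      have h5 := rpow_neg_sub_le h1 h2 (show (1 : ℝ) ≤ ((0 + 3 : ℕ) : ℝ) by norm_num)
      gcongr
    · intro i j hij
      refine rpow_neg_sub_antitone h1 h2 ?_ ?_ ?_
      · simp
      · simp
      · exact_mod_cast Nat.add_le_add_right hij 3
    · intro i
      refine sub_nonneg.mpr (Real.rpow_le_rpow_of_exponent_le ?_ (by linarith))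
      exact_mod_cast (by omega : 1 ≤ i + 3)
  refine (norm_add_le _ _).trans ((add_le_add hA hB).trans ?_)
  nlinarith

/-- `L(σ, χ)` is Lipschitz with constant `2 q` on `σ > 1`. -/
lemma norm_dser_sub_le {χ : DirichletCharacter ℂ q} (hχ : χ ≠ 1) {σ σ' : ℝ} (h1 : 1 < σ)
    (h2 : σ ≤ σ') : ‖dser (cfun χ) σ - dser (cfun χ) σ'‖ ≤ 2 * q * (σ' - σ) := by
  have ha := (tendsto_dser (norm_cfun_le χ) h1).comp (tendsto_add_atTop_nat 3)
  have hb := (tendsto_dser (norm_cfun_le χ) (h1.trans_le h2)).comp (tendsto_add_atTop_nat 3)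
  exact le_of_tendsto (ha.sub hb).norm
    (Eventually.of_forall fun n => norm_sum_sub_le hχ h1.le h2 n)
end Characters

/-! ### Quadratic characters -/

section Quadratic

open Filter Topology

variable {q : ℕ} [NeZero q]

/-- The truncated geometric sum `1 + x + ⋯ + x ^ (n - 1)`. -/
noncomputable def geo (x : ℝ) (n : ℕ) : ℝ := ∑ i ∈ Finset.range n, x ^ i

lemma geo_succ (x : ℝ) (n : ℕ) : geo x (n + 1) = 1 + x * geo x n := by
  rw [geo, geo, Finset.sum_range_succ', Finset.mul_sum, add_comm]
  simp [pow_succ']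

lemma geo_succ' (x : ℝ) (n : ℕ) : geo x (n + 1) = geo x n + x ^ n :=
  Finset.sum_range_succ _ _

lemma geo_mul (x : ℝ) (n : ℕ) : geo x n * (1 - x) = 1 - x ^ n := by
  have := geom_sum_mul_neg x n
  exact this

/-- The arithmetic-geometric mean inequality for `1, y ^ 2, …, y ^ (2 n)`. -/
lemma le_geo {y : ℝ} (hy : 0 ≤ y) : ∀ n : ℕ, (n + 1 : ℕ) * y ^ n ≤ geo (y ^ 2) (n + 1)
  | 0 => by simp [geo]
  | 1 => by
    simp only [geo, Finset.sum_range_succ, Finset.sum_range_zero]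
    norm_num
    nlinarith [sq_nonneg (1 - y)]
  | n + 2 => by
    have ih := le_geo hy n
    rw [geo_succ', geo_succ]
    have h1 : 2 * y ^ (n + 2) ≤ 1 + (y ^ 2) ^ (n + 2) := by
      have : (y ^ 2) ^ (n + 2) = (y ^ (n + 2)) ^ 2 := by ring
      nlinarith [sq_nonneg (1 - y ^ (n + 2))]
    have h2 : y ^ 2 * ((n + 1 : ℕ) * y ^ n) ≤ y ^ 2 * geo (y ^ 2) (n + 1) := by gcongr
    have h3 : ((n + 2 + 1 : ℕ) : ℝ) * y ^ (n + 2) =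
        2 * y ^ (n + 2) + y ^ 2 * ((n + 1 : ℕ) * y ^ n) := by push_cast; ring
    linarith

lemma geo_pos {x : ℝ} (hx : 0 ≤ x) (n : ℕ) : 0 < geo x (n + 1) := by
  have h : 0 ≤ geo x n := Finset.sum_nonneg fun i _ => by positivity
  rw [geo_succ]
  positivity

/-- The weights `b_n = 1 / n - x ^ n / (1 + ⋯ + x ^ (n - 1))`, indexed from `n = 1`. -/
noncomputable def lamWeight (x : ℝ) (n : ℕ) : ℝ :=
  1 / (n + 1 : ℕ) - x ^ (n + 1) / geo x (n + 1)

lemma lamWeight_zero (x : ℝ) : lamWeight x 0 = 1 - x := by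
  simp [lamWeight, geo]

/-- The weights `b_n` decrease; this is the heart of the elementary proof that `L(1, χ) ≠ 0` for
quadratic `χ`. -/
lemma lamWeight_antitone {x : ℝ} (hx : 0 ≤ x) (hx1 : x ≤ 1) : Antitone (lamWeight x) := by
  refine antitone_nat_of_succ_le fun n => ?_
  set y := Real.sqrt x with hy
  have hy0 : 0 ≤ y := Real.sqrt_nonneg x
  have hy2 : y ^ 2 = x := Real.sq_sqrt hx
  have hy1 : y ≤ 1 := by rw [hy]; exact Real.sqrt_le_one.mpr hx1
  have h1 := le_geo hy0 n
  have h2 := le_geo hy0 (n + 1)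
  rw [hy2] at h1 h2
  have p1 := geo_pos hx n
  have p2 := geo_pos hx (n + 1)
  have h3 : ((n + 1 : ℕ) : ℝ) * (n + 1 + 1 : ℕ) * x ^ (n + 1) ≤
      geo x (n + 1) * geo x (n + 1 + 1) := by
    calc ((n + 1 : ℕ) : ℝ) * (n + 1 + 1 : ℕ) * x ^ (n + 1)
        = ((n + 1 : ℕ) * y ^ n) * ((n + 1 + 1 : ℕ) * y ^ (n + 1)) * y := by rw [← hy2]; ring
      _ ≤ ((n + 1 : ℕ) * y ^ n) * ((n + 1 + 1 : ℕ) * y ^ (n + 1)) * 1 := by gcongr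
      _ ≤ geo x (n + 1) * geo x (n + 1 + 1) * 1 := by gcongr
      _ = _ := mul_one _
  have h4 : lamWeight x n - lamWeight x (n + 1) =
      1 / ((n + 1 : ℕ) * (n + 1 + 1 : ℕ)) - x ^ (n + 1) / (geo x (n + 1) * geo x (n + 1 + 1)) := by
    have e : geo x (n + 1 + 1) = 1 + x * geo x (n + 1) := geo_succ x (n + 1)
    have e1 : 1 / ((n + 1 : ℕ) : ℝ) - 1 / (n + 1 + 1 : ℕ) = 1 / ((n + 1 : ℕ) * (n + 1 + 1 : ℕ)) := by
      field_simp
      push_cast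
      ring
    have e2 : x ^ (n + 1) / geo x (n + 1) - x ^ (n + 1 + 1) / geo x (n + 1 + 1) =
        x ^ (n + 1) / (geo x (n + 1) * geo x (n + 1 + 1)) := by
      rw [div_sub_div _ _ p1.ne' p2.ne']
      congr 1
      rw [e]
      ring
    rw [← e1, ← e2, lamWeight, lamWeight]
    ring
  have h5 : x ^ (n + 1) / (geo x (n + 1) * geo x (n + 1 + 1)) ≤
      1 / ((n + 1 : ℕ) * (n + 1 + 1 : ℕ)) := by
    rw [div_le_div_iff₀ (by positivity) (by positivity)]
    linarith
  linarith

lemma lamWeight_nonneg {x : ℝ} (hx : 0 ≤ x) (hx1 : x ≤ 1) (n : ℕ) : 0 ≤ lamWeight x n := by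
  rw [lamWeight, sub_nonneg, div_le_div_iff₀ (geo_pos hx n) (by positivity), one_mul, mul_comm,
    ← nsmul_eq_mul]
  have h := Finset.card_nsmul_le_sum (Finset.range (n + 1)) (fun i => x ^ i) (x ^ (n + 1))
    (fun i hi => pow_le_pow_of_le_one hx hx1 (Finset.mem_range.mp hi).le)
  simpa [geo] using h

lemma hasSum_pnat {f : ℕ → ℂ} {T : ℂ} (h : HasSum (fun n : ℕ+ => f n) T) :
    HasSum (fun n : ℕ => f (n + 1)) T :=
  Equiv.pnatEquivNat.symm.hasSum_iff.mpr h

/-- The Lambert series identity `∑ χ(n) x ^ n / (1 - x ^ n) = ∑ (1 * χ)(n) x ^ n`. -/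
lemma lambert {q : ℕ} (χ : DirichletCharacter ℂ q) {x : ℝ} (hx : 0 ≤ x) (hx1 : x < 1) : ∃ T : ℂ,
    HasSum (fun n : ℕ => cfun χ (n + 1) * ((x ^ (n + 1) / (1 - x ^ (n + 1)) : ℝ) : ℂ)) T ∧
    HasSum (fun n : ℕ => χ.zetaMul (n + 1) * ((x ^ (n + 1) : ℝ) : ℂ)) T := by
  set F : ℕ+ × ℕ+ → ℂ := fun c => cfun χ c.1 * ((x ^ (c.1 * c.2 : ℕ) : ℝ) : ℂ) with hFdef
  have hF : Summable F := by
    have h := summable_prod_mul_pow (𝕜 := ℝ) 0 (r := x) (by rwa [Real.norm_of_nonneg hx])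
    refine Summable.of_norm_bounded h fun c => ?_
    have h0 : 0 ≤ x ^ (c.1 * c.2 : ℕ) := by positivity
    rw [hFdef, norm_mul, Complex.norm_real, Real.norm_of_nonneg h0, pow_zero, one_mul]
    exact mul_le_of_le_one_left h0 (norm_cfun_le χ _)
  refine ⟨∑' c, F c, ?_, ?_⟩
  · have h1 : HasSum (fun a : ℕ+ => cfun χ a * ((x ^ (a : ℕ) / (1 - x ^ (a : ℕ)) : ℝ) : ℂ))
        (∑' c, F c) := by
      refine hF.hasSum.prod_fiberwise fun a => ?_
      have h2 : x ^ (a : ℕ) < 1 := pow_lt_one₀ hx hx1 a.pos.ne'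
      have h3 := (hasSum_geometric_of_lt_one (pow_nonneg hx a) h2).mul_left (x ^ (a : ℕ))
      have h4 : HasSum (fun b : ℕ+ => x ^ ((a : ℕ) * b)) (x ^ (a : ℕ) / (1 - x ^ (a : ℕ))) := by
        rw [← Equiv.pnatEquivNat.symm.hasSum_iff, div_eq_mul_inv]
        have h5 : (fun b : ℕ+ => x ^ ((a : ℕ) * b)) ∘ Equiv.pnatEquivNat.symm =
            fun i : ℕ => x ^ (a : ℕ) * (x ^ (a : ℕ)) ^ i := by
          ext n
          simp [pow_mul, pow_succ']
        rw [h5]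
        exact h3
      exact (Complex.hasSum_ofReal.mpr h4).mul_left (cfun χ a)
    exact hasSum_pnat (f := fun n => cfun χ n * ((x ^ n / (1 - x ^ n) : ℝ) : ℂ)) h1
  · have h1 : HasSum (fun n : ℕ+ => χ.zetaMul n * ((x ^ (n : ℕ) : ℝ) : ℂ)) (∑' c, F c) := by
      have h2 := (sigmaAntidiagonalEquivProd.hasSum_iff.mpr hF.hasSum).sigma
        (fun n => hasSum_fintype _)
      convert h2 using 1
      ext n
      simp only [Function.comp_def, hFdef, sigmaAntidiagonalEquivProd, divisorsAntidiagonalFactors,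
        Equiv.coe_fn_mk, PNat.mk_coe, Finset.univ_eq_attach]
      rw [(n : ℕ).divisorsAntidiagonal.sum_attach
        (fun c : ℕ × ℕ => cfun χ c.1 * ((x ^ (c.1 * c.2) : ℝ) : ℂ)),
        Nat.sum_divisorsAntidiagonal (fun a b => cfun χ a * ((x ^ (a * b) : ℝ) : ℂ)),
        DirichletCharacter.zetaMul, ArithmeticFunction.coe_zeta_mul_apply, Finset.sum_mul]
      refine Finset.sum_congr rfl fun d hd => ?_
      rw [Nat.mul_div_cancel' (Nat.dvd_of_mem_divisors hd)]
      have hd0 : d ≠ 0 := (Nat.pos_of_mem_divisors hd).ne'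
      simp [toArithmeticFunction, hd0, cfun_apply]
    exact hasSum_pnat (f := fun n => χ.zetaMul n * ((x ^ n : ℝ) : ℂ)) h1

open scoped ComplexOrder in
/-- The divisor sum of a quadratic character is at least `1` at squares. -/
lemma one_le_zetaMul_sq {q : ℕ} {χ : DirichletCharacter ℂ q} (hχ : χ ^ 2 = 1) (m : ℕ) (hm : 0 < m) :
    1 ≤ χ.zetaMul (m ^ 2) := by
  induction m using Nat.recOnPosPrimePosCoprime with
  | zero => exact absurd hm (lt_irrefl _)
  | one => simp [χ.isMultiplicative_zetaMul.map_one]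
  | prime_pow p n hp hn =>
    rw [← pow_mul, DirichletCharacter.zetaMul, ArithmeticFunction.coe_zeta_mul_apply,
      Nat.sum_divisors_prime_pow hp]
    have e : ∀ k, (toArithmeticFunction (χ ·) : ArithmeticFunction ℂ) (p ^ k) =
        χ (p : ZMod q) ^ k := by
      intro k
      simp [toArithmeticFunction, hp.ne_zero]
    simp only [e]
    rcases MulChar.isQuadratic_iff_sq_eq_one.mpr hχ p with h | h | h
    · rw [h, Finset.sum_range_succ']
      simp
    · rw [h]
      simp only [one_pow, Finset.sum_const, Finset.card_range, nsmul_eq_mul, mul_one]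
      exact_mod_cast Nat.le_add_left 1 (n * 2)
    · rw [h, neg_one_geom_sum, if_neg]
      rw [Nat.not_even_iff_odd]
      exact ⟨n, by ring⟩
  | coprime a b ha hb hab iha ihb =>
    rw [mul_pow, χ.isMultiplicative_zetaMul.map_mul_of_coprime (hab.pow 2 2)]
    exact one_le_mul_of_one_le_of_one_le (iha (by omega)) (ihb (by omega))

/-- Only the squares are kept: the coefficients of the Lambert series are nonnegative, and at
least `1` at squares. -/
lemma re_lambert_ge {q : ℕ} {χ : DirichletCharacter ℂ q} (hχ : χ ^ 2 = 1) {x : ℝ} (hx : 0 ≤ x) {T : ℂ}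
    (hT : HasSum (fun n : ℕ => χ.zetaMul (n + 1) * ((x ^ (n + 1) : ℝ) : ℂ)) T) (M : ℕ) :
    ∑ m ∈ Finset.range M, x ^ ((m + 1) ^ 2) ≤ T.re := by
  have hre := Complex.hasSum_re hT
  simp only [Complex.re_mul_ofReal] at hre
  have hinj : Function.Injective fun m : ℕ => (m + 1) ^ 2 - 1 := by
    intro a b hab
    have h1 : 1 ≤ (a + 1) ^ 2 := Nat.one_le_pow _ _ (by omega)
    have h2 : 1 ≤ (b + 1) ^ 2 := Nat.one_le_pow _ _ (by omega)
    have h3 : (a + 1) ^ 2 = (b + 1) ^ 2 := by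
      simp only at hab
      omega
    have := Nat.pow_left_injective (n := 2) (by norm_num) h3
    omega
  have h := sum_le_hasSum ((Finset.range M).map ⟨_, hinj⟩) (fun n _ => mul_nonneg
    (Complex.le_def.mp (DirichletCharacter.zetaMul_nonneg hχ (n + 1))).1 (pow_nonneg hx _)) hre
  refine le_trans ?_ h
  rw [Finset.sum_map]
  refine Finset.sum_le_sum fun m _ => ?_
  have h1 : (m + 1) ^ 2 - 1 + 1 = (m + 1) ^ 2 := Nat.sub_add_cancel (Nat.one_le_pow _ _ (by omega))
  simp only [Function.Embedding.coeFn_mk, h1]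
  have h2 := (Complex.le_def.mp (one_le_zetaMul_sq hχ (m + 1) (by omega))).1
  rw [Complex.one_re] at h2
  exact le_mul_of_one_le_left (pow_nonneg hx _) h2

/-- The effective lower bound for `L(σ, χ)` with `χ` quadratic and `σ` close to `1`. -/
lemma norm_dser_ge_of_quadratic {χ : DirichletCharacter ℂ q} (hχ : χ ≠ 1) (hχ2 : χ ^ 2 = 1)
    {σ : ℝ} (hσ : 1 < σ) (hσ2 : σ - 1 ≤ 1 / (128 * q ^ 2)) :
    1 / (64 * q) ≤ ‖dser (cfun χ) σ‖ := by
  have hq : (1 : ℝ) ≤ q := by exact_mod_cast NeZero.one_le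
  have hq0 : (0 : ℝ) < q := by linarith
  set d : ℝ := 1 / (32 * q ^ 2) with hd
  have hd0 : 0 < d := by positivity
  have hdq : d * q ^ 2 = 1 / 32 := by rw [hd]; field_simp
  have hd1 : d ≤ 1 / 32 := by
    have := mul_le_mul_of_nonneg_left (one_le_pow₀ hq : 1 ≤ (q : ℝ) ^ 2) hd0.le
    linarith
  set x : ℝ := 1 - d with hxd
  have hx : 0 ≤ x := by linarith
  have hx1 : x < 1 := by linarith
  obtain ⟨T, hT1, hT2⟩ := lambert χ hx hx1
  have hT := re_lambert_ge hχ2 hx hT2 (4 * q)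
  have hTq : 2 * (q : ℝ) ≤ T.re := by
    refine le_trans ?_ hT
    have h1 : ∀ m ∈ Finset.range (4 * q), (1 / 2 : ℝ) ≤ x ^ ((m + 1) ^ 2) := by
      intro m hm
      have h2 := one_add_mul_le_pow (a := -d) (by linarith) ((m + 1) ^ 2)
      have h3 : ((m + 1 : ℕ) : ℝ) ≤ 4 * q := by
        exact_mod_cast Nat.succ_le_of_lt (Finset.mem_range.mp hm)
      have h4 : (((m + 1) ^ 2 : ℕ) : ℝ) ≤ 16 * q ^ 2 := by
        push_cast at h3 ⊢
        nlinarith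
      have h5 : 1 + -d = x := by rw [hxd]; ring
      rw [h5] at h2
      refine le_trans ?_ h2
      nlinarith
    have h6 := Finset.card_nsmul_le_sum _ _ _ h1
    rw [Finset.card_range, nsmul_eq_mul] at h6
    push_cast at h6
    linarith
  have hpart : ∀ n : ℕ, ∑ i ∈ Finset.range (n + 3), cfun χ i * (((i : ℝ) ^ (-1 : ℝ) : ℝ) : ℂ) =
      ∑ i ∈ Finset.range (n + 2), cfun χ (i + 1) * (lamWeight x i : ℂ) +
        ((1 - x : ℝ) : ℂ) * ∑ i ∈ Finset.range (n + 2),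
          cfun χ (i + 1) * ((x ^ (i + 1) / (1 - x ^ (i + 1)) : ℝ) : ℂ) := by
    intro n
    rw [Finset.sum_range_succ', Finset.mul_sum, ← Finset.sum_add_distrib]
    have h0 : ((0 : ℕ) : ℝ) ^ (-1 : ℝ) = 0 := by simp [Real.zero_rpow]
    rw [h0, Complex.ofReal_zero, mul_zero, add_zero]
    refine Finset.sum_congr rfl fun i _ => ?_
    have h7 : ((i + 1 : ℕ) : ℝ) ^ (-1 : ℝ) =
        lamWeight x i + (1 - x) * (x ^ (i + 1) / (1 - x ^ (i + 1))) := by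
      rw [lamWeight, ← geo_mul, Real.rpow_neg_one]
      have h8 := (geo_pos hx i).ne'
      have h9 : (1 - x) ≠ 0 := by linarith
      field_simp
      ring
    rw [h7]
    push_cast
    ring
  have hlow : ∀ n : ℕ, (1 - x) * (∑ i ∈ Finset.range (n + 2),
      cfun χ (i + 1) * ((x ^ (i + 1) / (1 - x ^ (i + 1)) : ℝ) : ℂ)).re - q * (1 - x) -
      2 * q * (σ - 1) ≤
      (∑ i ∈ Finset.range (n + 3), cfun χ i * (((i : ℝ) ^ (-σ) : ℝ) : ℂ)).re := by
    intro n
    have h1 := norm_sum_sub_le hχ le_rfl hσ.le n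
    have h2 := norm_sum_mul_le (fun n => norm_sum_char_le hχ 1 n)
      (lamWeight_antitone hx hx1.le) (lamWeight_nonneg hx hx1.le) (n + 2)
    rw [lamWeight_zero] at h2
    have h3 := (abs_le.mp ((Complex.abs_re_le_norm _).trans h1)).2
    have h4 := (abs_le.mp ((Complex.abs_re_le_norm _).trans h2)).1
    rw [hpart n, Complex.sub_re, Complex.add_re, Complex.re_ofReal_mul] at h3
    linarith
  have ha := (Complex.continuous_re.tendsto _).comp
    ((tendsto_dser (norm_cfun_le χ) hσ).comp (tendsto_add_atTop_nat 3))
  have hb := (((Complex.continuous_re.tendsto _).comp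
    (hT1.tendsto_sum_nat.comp (tendsto_add_atTop_nat 2))).const_mul (1 - x)).sub_const
      (q * (1 - x)) |>.sub_const (2 * q * (σ - 1))
  have hfin := le_of_tendsto_of_tendsto' hb ha hlow
  refine le_trans ?_ (Complex.re_le_norm _)
  refine le_trans ?_ hfin
  have h1x : 1 - x = d := by rw [hxd]; ring
  rw [h1x]
  have h10 : 2 * q * (σ - 1) ≤ 1 / (64 * q) := by
    calc 2 * q * (σ - 1) ≤ 2 * q * (1 / (128 * q ^ 2)) := by gcongr
      _ = 1 / (64 * q) := by field_simp; norm_num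
  have h11 : d * q = 2 * (1 / (64 * q)) := by rw [hd]; field_simp; norm_num
  nlinarith

end Quadratic

/-! ### The polynomial lower bound -/

section LowerBound

variable {q : ℕ} [NeZero q]

/-- The inequality `3 + 4 cos θ + cos 2θ ≥ 0` summed over primes. -/
lemma three_four_one {q : ℕ} (χ : DirichletCharacter ℂ q) {σ : ℝ} (hσ : 1 < σ) :
    0 ≤ 3 * psum 1 σ + 4 * psum (cfun χ) σ + psum (cfun (χ ^ 2)) σ := by
  have h1 := summable_psum (φ := 1) (by simp) hσ
  have h2 := summable_psum (norm_cfun_le χ) hσ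
  have h3 := summable_psum (norm_cfun_le (χ ^ 2)) hσ
  rw [psum, psum, psum, ← tsum_mul_left, ← tsum_mul_left,
    ← (h1.mul_left 3).tsum_add (h2.mul_left 4),
    ← ((h1.mul_left 3).add (h2.mul_left 4)).tsum_add h3]
  refine tsum_nonneg fun p => ?_
  have h : (0 : ℝ) ≤ ((p : ℕ) : ℝ) ^ (-σ) := by positivity
  have e : cfun (χ ^ 2) p = cfun χ p ^ 2 := by
    simp [cfun_apply, MulChar.pow_apply' χ (two_ne_zero)]
  have hn := norm_cfun_le χ p
  have hsq : (cfun χ p).re * (cfun χ p).re + (cfun χ p).im * (cfun χ p).im ≤ 1 := by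
    rw [← Complex.normSq_apply, Complex.normSq_eq_norm_sq]
    nlinarith [norm_nonneg (cfun χ p)]
  have hre : (cfun (χ ^ 2) p).re = (cfun χ p).re * (cfun χ p).re -
      (cfun χ p).im * (cfun χ p).im := by
    rw [e, sq, Complex.mul_re]
  have h5 : 0 ≤ 3 + 4 * (cfun χ p).re + (cfun (χ ^ 2) p).re := by
    rw [hre]
    nlinarith [sq_nonneg (1 + (cfun χ p).re)]
  have h6 : (3 * (((1 : ℕ →* ℂ) p).re * ((p : ℕ) : ℝ) ^ (-σ)) +
      4 * ((cfun χ p).re * ((p : ℕ) : ℝ) ^ (-σ)) + (cfun (χ ^ 2) p).re * ((p : ℕ) : ℝ) ^ (-σ)) =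
      (3 + 4 * (cfun χ p).re + (cfun (χ ^ 2) p).re) * ((p : ℕ) : ℝ) ^ (-σ) := by
    rw [MonoidHom.one_apply, Complex.one_re]
    ring
  rw [h6]
  exact mul_nonneg h5 h

/-- The `3 + 4 cos + cos 2` inequality in the form of a lower bound for `|L(1 + η, χ)| ^ 4`, with
`L(1 + η, χ ^ 2)` bounded above by `q`. -/
lemma norm_dser_pow_four_ge {χ : DirichletCharacter ℂ q} (hχ2 : χ ^ 2 ≠ 1) {η : ℝ} (hη : 0 < η)
    (hη1 : η ≤ 1) : Real.exp (-8 * K₀) * (η ^ 3 / (8 * q)) ≤ ‖dser (cfun χ) (1 + η)‖ ^ 4 := by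
  have hσ : 1 < 1 + η := by linarith
  have hq : (0 : ℝ) < q := by exact_mod_cast NeZero.pos q
  have h0 := three_four_one χ hσ
  have h1 := abs_le.mp (log_zser hσ)
  have l2 := log_dser (norm_cfun_le χ) hσ
  have l3 := log_dser (norm_cfun_le (χ ^ 2)) hσ
  have h2 := abs_le.mp l2.2
  have h3 := abs_le.mp l3.2
  have h4 : Real.log (zser (1 + η)) ≤ Real.log (2 / η) := by
    refine Real.log_le_log (zser_pos hσ) ((zser_le hσ (by linarith)).trans (le_of_eq ?_))
    congr 1
    ring
  have h5 : Real.log ‖dser (cfun (χ ^ 2)) (1 + η)‖ ≤ Real.log q :=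
    Real.log_le_log (norm_pos_iff.mpr l3.1) (norm_dser_le hχ2 hσ)
  have hL := norm_pos_iff.mpr l2.1
  rw [← Real.log_le_log_iff (by positivity) (by positivity), Real.log_mul (by positivity)
    (by positivity), Real.log_exp, Real.log_pow]
  have h6 : Real.log (η ^ 3 / (8 * q)) = -(3 * Real.log (2 / η)) - Real.log q := by
    rw [Real.log_div (by positivity) (by positivity), Real.log_mul (by positivity) (by positivity),
      Real.log_pow, Real.log_div (by positivity) (by positivity)]
    have : (8 : ℝ) = 2 ^ 3 := by norm_num
    rw [this, Real.log_pow]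
    push_cast
    ring
  rw [h6]
  push_cast
  linarith [h1.1, h1.2, h2.1, h2.2, h3.1, h3.2]

/-- The constant in the lower bound for `L`-functions. -/
noncomputable def κ₀ : ℝ := Real.exp (-10 * K₀) / 4096

lemma κ₀_pos : 0 < κ₀ := by
  rw [κ₀]
  positivity

/-- An effective lower bound for nontrivial `L`-functions, polynomial in the modulus. -/
lemma norm_dser_char_ge {χ : DirichletCharacter ℂ q} (hχ : χ ≠ 1) {σ : ℝ} (hσ : 1 < σ)
    (hσ2 : σ ≤ 2) : κ₀ / q ^ 5 ≤ ‖dser (cfun χ) σ‖ := by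
  have hq : (1 : ℝ) ≤ q := by exact_mod_cast NeZero.one_le
  have hq0 : (0 : ℝ) < q := by linarith
  have htriv := norm_dser_ge (norm_cfun_le χ) hσ hσ2
  have hK := K₀_nonneg
  set c : ℝ := Real.exp (-8 * K₀) with hc
  set d : ℝ := Real.exp (-2 * K₀) with hd
  have hcd : κ₀ = c * d / 4096 := by
    rw [κ₀, hc, hd, ← Real.exp_add]
    ring_nf
  have hc0 : 0 < c := Real.exp_pos _
  have hd0 : 0 < d := Real.exp_pos _
  have hc1 : c ≤ 1 := Real.exp_le_one_iff.mpr (by linarith)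
  have hd1 : d ≤ 1 := Real.exp_le_one_iff.mpr (by linarith)
  have hcd1 : c * d ≤ 1 := mul_le_one₀ hc1 hd0.le hd1
  rw [hcd]
  by_cases h2 : χ ^ 2 = 1
  · rcases le_or_gt (σ - 1) (1 / (128 * q ^ 2)) with h | h
    · refine le_trans ?_ (norm_dser_ge_of_quadratic hχ h2 hσ h)
      calc c * d / 4096 / (q : ℝ) ^ 5 ≤ 1 / 64 / (q : ℝ) ^ 1 := by
            gcongr ?_ / ?_
            · linarith
            · exact pow_le_pow_right₀ hq (by norm_num)
        _ = 1 / (64 * (q : ℝ)) := by field_simp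
    · refine le_trans ?_ htriv
      calc c * d / 4096 / q ^ 5 ≤ 1 * d / 256 / q ^ 2 := by
            gcongr ?_ / ?_
            · nlinarith
            · exact pow_le_pow_right₀ hq (by norm_num)
        _ = d * (1 / (128 * q ^ 2) / 2) := by field_simp; norm_num
        _ ≤ d * ((σ - 1) / 2) := by gcongr
  · set η : ℝ := c / (2048 * q ^ 5) with hη
    have hη0 : 0 < η := by positivity
    have hq5 : (1 : ℝ) ≤ q ^ 5 := one_le_pow₀ hq
    have hη1 : η ≤ 1 := by
      rw [hη, div_le_one (by positivity)]
      linarith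
    rcases le_or_gt σ (1 + η) with h | h
    · have h4 := norm_dser_pow_four_ge h2 hη0 hη1
      have h5 : 4 * q * η ≤ ‖dser (cfun χ) (1 + η)‖ := by
        refine le_of_pow_le_pow_left₀ (n := 4) (by norm_num) (norm_nonneg _) (le_trans ?_ h4)
        refine le_of_eq ?_
        rw [← hc]
        have h6 : (4 * q * η) ^ 4 = 256 * q ^ 4 * η ^ 3 * η := by ring
        rw [h6]
        nth_rewrite 2 [hη]
        field_simp
        norm_num
      have h7 := norm_dser_sub_le hχ hσ h
      have h8 : 2 * q * (1 + η - σ) ≤ 2 * q * η := by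
        have : 1 + η - σ ≤ η := by linarith
        gcongr
      have h9 := norm_sub_norm_le (dser (cfun χ) (1 + η)) (dser (cfun χ) σ)
      rw [norm_sub_rev] at h9
      have h10 : 2 * q * η ≤ ‖dser (cfun χ) σ‖ := by linarith
      refine le_trans ?_ h10
      calc c * d / 4096 / q ^ 5 ≤ c * 1 / 1024 / q ^ 4 := by
            gcongr ?_ / ?_
            · nlinarith
            · exact pow_le_pow_right₀ hq (by norm_num)
        _ = 2 * q * η := by rw [hη]; field_simp; norm_num
    · refine le_trans ?_ htriv
      calc c * d / 4096 / q ^ 5 = d * (η / 2) := by rw [hη]; field_simp; norm_num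
        _ ≤ d * ((σ - 1) / 2) := by
            have : η ≤ σ - 1 := by linarith
            gcongr

end LowerBound

/-! ### Prime sums and the subgroup generated by `2` -/

section PrimeSums

variable {q : ℕ} [NeZero q]

/-- The principal character contributes a full `log ζ(σ)`, up to `O(log q)`. -/
lemma zser_le_dser_principal {σ : ℝ} (hσ : 1 < σ) :
    (q : ℝ) ^ (-σ) * zser σ ≤ ‖dser (cfun (1 : DirichletCharacter ℂ q)) σ‖ := by
  have hs := (summable_norm_term (norm_cfun_le (1 : DirichletCharacter ℂ q)) hσ).of_norm
  refine le_trans ?_ (Complex.re_le_norm _)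
  rw [dser, Complex.re_tsum hs, zser_eq hσ, ← tsum_mul_left]
  have hre := (Complex.hasSum_re hs.hasSum).summable
  have hnn : ∀ n : ℕ, 0 ≤ (cfun (1 : DirichletCharacter ℂ q) n *
      (((n : ℝ) ^ (-σ) : ℝ) : ℂ)).re := by
    intro n
    rw [Complex.re_mul_ofReal]
    refine mul_nonneg ?_ (by positivity)
    rw [cfun_apply]
    by_cases h : IsUnit (n : ZMod q)
    · rw [MulChar.one_apply h]; simp
    · rw [MulChar.map_nonunit _ h]; simp
  have hinj : Function.Injective fun k : ℕ => 1 + k * q := by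
    intro a b hab
    simpa [NeZero.ne q] using hab
  have h1 : Summable fun n : ℕ => (q : ℝ) ^ (-σ) * ((n + 1 : ℕ) : ℝ) ^ (-σ) :=
    ((summable_nat_add_iff 1).mpr (summable_rpow_neg hσ)).mul_left _
  refine le_trans (h1.tsum_le_tsum (fun k => ?_) (hre.comp_injective hinj :))
    (tsum_comp_le_tsum_of_inj hre hnn hinj)
  simp only [Function.comp_apply]
  have hu : cfun (1 : DirichletCharacter ℂ q) (1 + k * q) = 1 := by
    rw [cfun_apply]
    simp
  rw [hu, one_mul, Complex.ofReal_re, ← Real.mul_rpow (by positivity) (by positivity)]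
  have hq : 1 ≤ q := NeZero.one_le
  refine Real.rpow_le_rpow_of_nonpos (by positivity) ?_ (by linarith)
  have : 1 + k * q ≤ q * (k + 1) := by nlinarith
  exact_mod_cast this

/-- The constant in the lower bounds for prime sums over characters. -/
noncomputable def K₁ : ℝ := K₀ + |Real.log κ₀|

lemma psum_principal_ge {σ : ℝ} (hσ : 1 < σ) (hσ2 : σ ≤ 2) :
    Real.log (1 / (σ - 1)) - (5 * Real.log q + K₁) ≤
      psum (cfun (1 : DirichletCharacter ℂ q)) σ := by
  have h1 := zser_le_dser_principal (q := q) hσ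
  have l2 := log_dser (norm_cfun_le (1 : DirichletCharacter ℂ q)) hσ
  have h2 := abs_le.mp l2.2
  have hq : (1 : ℝ) ≤ q := by exact_mod_cast NeZero.one_le
  have hq0 : (0 : ℝ) < q := by linarith
  have hs : 0 < σ - 1 := by linarith
  have hz := zser_pos hσ
  have h3 := Real.log_le_log (by positivity) h1
  rw [Real.log_mul (by positivity) (by positivity), Real.log_rpow hq0] at h3
  have h4 := Real.log_le_log (by positivity) (zser_bounds hσ).1
  have h5 : 0 ≤ Real.log q := Real.log_nonneg hq
  have h6 : σ * Real.log q ≤ 5 * Real.log q := by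
    apply mul_le_mul_of_nonneg_right _ h5
    linarith
  rw [K₁]
  linarith [h2.1, h2.2, abs_nonneg (Real.log κ₀)]

lemma psum_nonprincipal_ge {χ : DirichletCharacter ℂ q} (hχ : χ ≠ 1) {σ : ℝ} (hσ : 1 < σ)
    (hσ2 : σ ≤ 2) : -(5 * Real.log q + K₁) ≤ psum (cfun χ) σ := by
  have h1 := norm_dser_char_ge hχ hσ hσ2
  have h2 := abs_le.mp (log_dser (norm_cfun_le χ) hσ).2
  have hq : (1 : ℝ) ≤ q := by exact_mod_cast NeZero.one_le
  have hq0 : (0 : ℝ) < q := by linarith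
  have hκ := κ₀_pos
  have h3 := Real.log_le_log (by positivity) h1
  rw [Real.log_div (by positivity) (by positivity), Real.log_pow] at h3
  push_cast at h3
  rw [K₁]
  linarith [h2.1, h2.2, neg_abs_le (Real.log κ₀)]

/-- Orthogonality: a nonnegative combination of characters below the (scaled) indicator function of
the subgroup generated by `2`. The coefficient of `χ` is `∑ χ(2) ^ i` over `i` below the order of
`2`. -/
lemma exists_char_weights (hq : Odd q) : ∃ c : DirichletCharacter ℂ q → ℝ,
    (∀ χ, 0 ≤ c χ) ∧ c 1 = orderOf (2 : ZMod q) ∧ (∑ χ, c χ ≤ q.totient) ∧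
    ∀ a : ZMod q, (0 ≤ q.totient - ∑ χ, c χ * (χ a).re) ∧
      ((¬ ∃ j : ℕ, a = 2 ^ j) → ∑ χ, c χ * (χ a).re = 0) := by
  classical
  have h2u : IsUnit (2 : ZMod q) := by
    have : IsUnit ((2 : ℕ) : ZMod q) :=
      (ZMod.isUnit_iff_coprime 2 q).mpr (Nat.coprime_two_left.mpr hq)
    simpa using this
  set r := orderOf (2 : ZMod q) with hr
  have hpow : (2 : ZMod q) ^ r = 1 := pow_orderOf_eq_one _
  set C : DirichletCharacter ℂ q → ℂ := fun χ => ∑ i ∈ Finset.range r, χ 2 ^ i with hC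
  have hCval : ∀ χ, C χ = if χ 2 = 1 then ((r : ℝ) : ℂ) else 0 := by
    intro χ
    split_ifs with h
    · simp [hC, h]
    · have h1 := geom_sum_mul (χ 2) r
      rw [← map_pow, hpow, map_one, sub_self] at h1
      exact (mul_eq_zero.mp h1).resolve_right (sub_ne_zero.mpr h)
  set c : DirichletCharacter ℂ q → ℝ := fun χ => if χ 2 = 1 then (r : ℝ) else 0 with hc
  have hCc : ∀ χ, C χ = (c χ : ℂ) := by
    intro χ
    rw [hCval, hc]
    dsimp only
    split_ifs <;> simp
  have hmain : ∀ a : ZMod q, ∑ χ, c χ * (χ a).re =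
      q.totient * ((Finset.range r).filter fun i => (2 : ZMod q) ^ i * a = 1).card := by
    intro a
    have h1 : ∑ χ : DirichletCharacter ℂ q, (c χ : ℂ) * χ a =
        ((q.totient * ((Finset.range r).filter fun i => (2 : ZMod q) ^ i * a = 1).card : ℝ) : ℂ) := by
      simp only [← hCc, hC, Finset.sum_mul, ← map_pow, ← map_mul]
      rw [Finset.sum_comm]
      simp only [DirichletCharacter.sum_characters_eq]
      rw [← Finset.sum_filter, Finset.sum_const, nsmul_eq_mul]
      push_cast
      ring
    have h2 := congrArg Complex.re h1
    rw [Complex.re_sum, Complex.ofReal_re] at h2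
    simpa only [Complex.re_ofReal_mul] using h2
  have hcard : ∀ a : ZMod q, ((Finset.range r).filter fun i => (2 : ZMod q) ^ i * a = 1).card ≤ 1 := by
    intro a
    refine Finset.card_le_one.mpr fun i hi j hj => ?_
    simp only [Finset.mem_filter, Finset.mem_range] at hi hj
    have hau : IsUnit a := IsUnit.of_mul_eq_one_right _ hi.2
    exact pow_injOn_Iio_orderOf hi.1 hj.1 (hau.mul_right_cancel (hi.2.trans hj.2.symm))
  have hle : ∀ a : ZMod q, ∑ χ, c χ * (χ a).re ≤ q.totient := by
    intro a
    rw [hmain a]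
    have : (((Finset.range r).filter fun i => (2 : ZMod q) ^ i * a = 1).card : ℝ) ≤ 1 := by
      exact_mod_cast hcard a
    exact mul_le_of_le_one_right (by positivity) this
  refine ⟨c, fun χ => ?_, ?_, ?_, fun a => ⟨sub_nonneg.mpr (hle a), fun ha => ?_⟩⟩
  · rw [hc]
    dsimp only
    split_ifs <;> positivity
  · rw [hc]
    simp [MulChar.one_apply h2u]
  · simpa using hle 1
  · rw [hmain a, Finset.filter_eq_empty_iff.mpr, Finset.card_empty, Nat.cast_zero, mul_zero]
    intro i hi h
    have hir := (Finset.mem_range.mp hi).le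
    refine ha ⟨r - i, ?_⟩
    refine (h2u.pow i).mul_left_cancel ?_
    rw [h, ← pow_add, Nat.add_sub_cancel' hir, hpow]

/-- Since `q ∣ 2 ^ r - 1`, the order `r` of `2` modulo `q` is at least `log q`. -/
lemma log_le_orderOf (hq : Odd q) : Real.log q ≤ orderOf (2 : ZMod q) ∧
    0 < orderOf (2 : ZMod q) := by
  have h2u : IsUnit (2 : ZMod q) := by
    have : IsUnit ((2 : ℕ) : ZMod q) :=
      (ZMod.isUnit_iff_coprime 2 q).mpr (Nat.coprime_two_left.mpr hq)
    simpa using this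
  have hpos : 0 < orderOf (2 : ZMod q) := by
    obtain ⟨u, hu⟩ := h2u
    rw [← hu, orderOf_units]
    exact orderOf_pos u
  refine ⟨?_, hpos⟩
  set r := orderOf (2 : ZMod q) with hr
  have hpow : (2 : ZMod q) ^ r = 1 := pow_orderOf_eq_one _
  have h2 : q ∣ 2 ^ r - 1 := by
    rw [← ZMod.natCast_eq_zero_iff, Nat.cast_sub Nat.one_le_two_pow]
    simp [hpow]
  have h3 : 0 < 2 ^ r - 1 := Nat.sub_pos_of_lt (Nat.one_lt_two_pow hpos.ne')
  have h4 : q ≤ 2 ^ r := (Nat.le_of_dvd h3 h2).trans (Nat.sub_le _ _)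
  have hq0 : (0 : ℝ) < q := by exact_mod_cast NeZero.pos q
  have h5 : (q : ℝ) ≤ 2 ^ r := by exact_mod_cast h4
  have h6 := Real.log_le_log hq0 h5
  rw [Real.log_pow] at h6
  have h7 := Real.log_two_lt_d9
  have : (r : ℝ) * Real.log 2 ≤ r * 1 := by
    gcongr
    linarith
  linarith

end PrimeSums

/-! ### The sieving Dirichlet series -/

section Sieve

open scoped Classical in
/-- The completely multiplicative indicator function of the integers with no odd prime factor
congruent to a power of `2` modulo `q`. -/
noncomputable def sieveFun (q : ℕ) : ℕ →* ℂ where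
  toFun n := if ∀ p : ℕ, p.Prime → p ≠ 2 → (∃ j : ℕ, (p : ZMod q) = 2 ^ j) → ¬ p ∣ n then 1 else 0
  map_one' := by
    rw [if_pos]
    intro p hp _ _ h
    exact hp.one_lt.ne' (Nat.dvd_one.mp h)
  map_mul' m n := by
    have h : (∀ p : ℕ, p.Prime → p ≠ 2 → (∃ j : ℕ, (p : ZMod q) = 2 ^ j) → ¬ p ∣ m * n) ↔
        (∀ p : ℕ, p.Prime → p ≠ 2 → (∃ j : ℕ, (p : ZMod q) = 2 ^ j) → ¬ p ∣ m) ∧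
        (∀ p : ℕ, p.Prime → p ≠ 2 → (∃ j : ℕ, (p : ZMod q) = 2 ^ j) → ¬ p ∣ n) := by
      constructor
      · intro h
        exact ⟨fun p hp h2 hj hd => h p hp h2 hj (hd.mul_right n),
          fun p hp h2 hj hd => h p hp h2 hj (hd.mul_left m)⟩
      · rintro ⟨h1, h2⟩ p hp hp2 hj hd
        exact (hp.dvd_mul.mp hd).elim (h1 p hp hp2 hj) (h2 p hp hp2 hj)
    rw [ite_zero_mul_ite_zero, mul_one]
    exact if_congr h rfl rfl

/-- The integers with no odd prime factor congruent to a power of `2` modulo `q`. -/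
def Good (q n : ℕ) : Prop :=
  ∀ p : ℕ, p.Prime → p ≠ 2 → (∃ j : ℕ, (p : ZMod q) = 2 ^ j) → ¬ p ∣ n

lemma sieveFun_of_good {q n : ℕ} (h : Good q n) : sieveFun q n = 1 := if_pos h

lemma sieveFun_of_not_good {q n : ℕ} (h : ¬ Good q n) : sieveFun q n = 0 := if_neg h

lemma Good.of_dvd {q m n : ℕ} (h : Good q n) (hd : m ∣ n) : Good q m :=
  fun p hp h2 hj hpm => h p hp h2 hj (hpm.trans hd)

lemma norm_sieveFun_le (q n : ℕ) : ‖sieveFun q n‖ ≤ 1 := by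
  by_cases h : Good q n
  · simp [sieveFun_of_good h]
  · simp [sieveFun_of_not_good h]

variable {q : ℕ} [NeZero q]

/-- A nonnegative combination of the character sums over primes, with weights of total mass at most
`φ(q)`, is at least the contribution of the principal character up to the error terms. -/
lemma weighted_psum_ge {c : DirichletCharacter ℂ q → ℝ} (hc0 : ∀ χ, 0 ≤ c χ)
    (hcs : ∑ χ, c χ ≤ q.totient) {σ : ℝ} (hσ : 1 < σ) (hσ2 : σ ≤ 2) :
    c 1 * Real.log (1 / (σ - 1)) - q.totient * (5 * Real.log q + K₁) ≤
      ∑ χ : DirichletCharacter ℂ q, c χ * psum (cfun χ) σ := by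
  classical
  set D : ℝ := 5 * Real.log q + K₁ with hD
  set L : ℝ := Real.log (1 / (σ - 1)) with hL
  have hD0 : 0 ≤ D := by
    have : 0 ≤ Real.log q := Real.log_natCast_nonneg q
    have := K₀_nonneg
    rw [hD, K₁]
    positivity
  have h1 : ∀ χ ∈ (Finset.univ : Finset (DirichletCharacter ℂ q)),
      c χ * ((if χ = 1 then L else 0) - D) ≤ c χ * psum (cfun χ) σ := by
    intro χ _
    refine mul_le_mul_of_nonneg_left ?_ (hc0 χ)
    split_ifs with h
    · rw [h]
      exact psum_principal_ge hσ hσ2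
    · rw [zero_sub]
      exact psum_nonprincipal_ge h hσ hσ2
  refine le_trans ?_ (Finset.sum_le_sum h1)
  simp only [mul_sub, Finset.sum_sub_distrib, mul_ite, mul_zero, Finset.sum_ite_eq',
    Finset.mem_univ, if_true, ← Finset.sum_mul]
  have := mul_le_mul_of_nonneg_right hcs hD0
  linarith

/-- The prime `2`. -/
def primeTwo : Nat.Primes := ⟨2, Nat.prime_two⟩

/-- At each prime the sieving function is dominated by `1` minus the normalized combination of
characters, except at the prime `2`, where an error `1` is allowed. -/
lemma sieveFun_prime_le {T S w : ℝ} {p : Nat.Primes} (hT : 0 < T) (hw : 0 ≤ w) (hw1 : w ≤ 1)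
    (ha1 : 0 ≤ T - S) (ha2 : (¬ ∃ j : ℕ, ((p : ℕ) : ZMod q) = 2 ^ j) → S = 0) :
    (sieveFun q p).re * w ≤
      w - 1 / T * (S * w) + Set.indicator ({primeTwo} : Set Nat.Primes) 1 p := by
  have hS1 : 1 / T * S ≤ 1 := by
    rw [one_div, inv_mul_le_iff₀ hT]
    linarith
  have hbad : 0 ≤ w - 1 / T * (S * w) := by
    have := mul_nonneg (sub_nonneg.mpr hS1) hw
    linarith
  have hi : (0 : ℝ) ≤ Set.indicator ({primeTwo} : Set Nat.Primes) 1 p :=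
    Set.indicator_nonneg (fun _ _ => zero_le_one) p
  by_cases hg : Good q p
  · rw [sieveFun_of_good hg, Complex.one_re]
    by_cases hp2 : p = primeTwo
    · rw [Set.indicator_of_mem (Set.mem_singleton_iff.mpr hp2), Pi.one_apply]
      linarith
    · have hp2' : (p : ℕ) ≠ 2 := fun h => hp2 (Subtype.ext h)
      have hS0 : S = 0 := ha2 fun hj => hg p p.2 hp2' hj dvd_rfl
      rw [hS0]
      linarith
  · rw [sieveFun_of_not_good hg, Complex.zero_re, zero_mul]
    linarith

/-- The prime sum of the sieving function is `(1 - r / φ(q)) log (1 / (σ - 1))` up to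
`O(log q + 1)`. -/
lemma psum_sieveFun_le (hq : Odd q) {σ : ℝ} (hσ : 1 < σ) (hσ2 : σ ≤ 2) :
    psum (sieveFun q) σ ≤ psum 1 σ -
      (orderOf (2 : ZMod q) : ℝ) / q.totient * Real.log (1 / (σ - 1)) +
        (5 * Real.log q + K₁) + 1 := by
  obtain ⟨c, hc0, hc1, hcs, hca⟩ := exists_char_weights hq
  have htot : (0 : ℝ) < q.totient := by exact_mod_cast Nat.totient_pos.mpr (NeZero.pos q)
  have hW := weighted_psum_ge hc0 hcs hσ hσ2
  rw [hc1] at hW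
  set W : ℝ := ∑ χ : DirichletCharacter ℂ q, c χ * psum (cfun χ) σ with hWdef
  have hsum : HasSum (fun p : Nat.Primes =>
      (∑ χ : DirichletCharacter ℂ q, c χ * (χ ((p : ℕ) : ZMod q)).re) * ((p : ℕ) : ℝ) ^ (-σ)) W := by
    have h : HasSum (fun p : Nat.Primes => ∑ χ : DirichletCharacter ℂ q,
        c χ * ((cfun χ p).re * ((p : ℕ) : ℝ) ^ (-σ))) W :=
      hasSum_sum fun χ _ => (summable_psum (norm_cfun_le χ) hσ).hasSum.mul_left (c χ)
    refine h.congr_fun ?_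
    intro p
    rw [Finset.sum_mul]
    refine Finset.sum_congr rfl fun χ _ => ?_
    rw [cfun_apply, mul_assoc]
  have h1 : HasSum (fun p : Nat.Primes => ((p : ℕ) : ℝ) ^ (-σ)) (psum 1 σ) := by
    rw [psum_one]
    exact (summable_prime_rpow hσ).hasSum
  have h2 : HasSum (fun p : Nat.Primes =>
      Set.indicator ({primeTwo} : Set Nat.Primes) (1 : Nat.Primes → ℝ) p) 1 := by
    have h := hasSum_single (f := Set.indicator ({primeTwo} : Set Nat.Primes)
      (1 : Nat.Primes → ℝ)) primeTwo fun p hp =>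
        Set.indicator_of_notMem (fun h => hp (Set.mem_singleton_iff.mp h)) _
    rwa [Set.indicator_of_mem (Set.mem_singleton _), Pi.one_apply] at h
  have hpt : ∀ p : Nat.Primes, (sieveFun q p).re * ((p : ℕ) : ℝ) ^ (-σ) ≤
      ((p : ℕ) : ℝ) ^ (-σ) - 1 / (q.totient : ℝ) *
        ((∑ χ : DirichletCharacter ℂ q, c χ * (χ ((p : ℕ) : ZMod q)).re) *
          ((p : ℕ) : ℝ) ^ (-σ)) +
        Set.indicator ({primeTwo} : Set Nat.Primes) (1 : Nat.Primes → ℝ) p := fun p =>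
    sieveFun_prime_le htot (by positivity)
      (Real.rpow_le_one_of_one_le_of_nonpos (by exact_mod_cast p.2.one_le) (by linarith))
      (hca _).1 (hca _).2
  have h0 : HasSum (fun p : Nat.Primes => (sieveFun q p).re * ((p : ℕ) : ℝ) ^ (-σ))
      (psum (sieveFun q) σ) := (summable_psum (norm_sieveFun_le q) hσ).hasSum
  have hle := hasSum_le hpt h0 ((h1.sub (hsum.mul_left (1 / (q.totient : ℝ)))).add h2)
  have h4 := mul_le_mul_of_nonneg_left hW (show 0 ≤ 1 / (q.totient : ℝ) by positivity)
  have h3 : 1 / (q.totient : ℝ) * (orderOf (2 : ZMod q) * Real.log (1 / (σ - 1)) -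
      q.totient * (5 * Real.log q + K₁)) =
        (orderOf (2 : ZMod q) : ℝ) / q.totient * Real.log (1 / (σ - 1)) -
          (5 * Real.log q + K₁) := by
    field_simp
  linarith

/-- The absolute constant in the bound for the sieving Dirichlet series. -/
noncomputable def K₂ : ℝ := 2 * K₀ + K₁ + 1 + Real.log 2

lemma K₂_nonneg : 0 ≤ K₂ := by
  have := K₀_nonneg
  have := Real.log_nonneg (show (1 : ℝ) ≤ 2 by norm_num)
  rw [K₂, K₁]
  positivity

lemma norm_dser_sieveFun_le (hq : Odd q) {y : ℝ} (hy : 1 ≤ y) :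
    ‖dser (sieveFun q) (1 + 1 / y)‖ ≤ Real.exp (5 * orderOf (2 : ZMod q) + K₂) *
      y ^ (1 - (orderOf (2 : ZMod q) : ℝ) / q.totient) := by
  have hy0 : 0 < y := by linarith
  have hy1 : 1 / y ≤ 1 := by rw [div_le_one hy0]; exact hy
  have hσ : 1 < 1 + 1 / y := by
    have : 0 < 1 / y := by positivity
    linarith
  have hσ2 : 1 + 1 / y ≤ 2 := by linarith
  have h1 := psum_sieveFun_le hq hσ hσ2
  have l2 := log_dser (norm_sieveFun_le q) hσ
  have h2 := abs_le.mp l2.2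
  have h3 := abs_le.mp (log_zser hσ)
  have h4 := Real.log_le_log (zser_pos hσ) (zser_le hσ hσ2)
  have e : 1 + 1 / y - 1 = 1 / y := by ring
  rw [e, one_div_one_div] at h1
  rw [e, div_div_eq_mul_div, div_one, Real.log_mul (by norm_num) hy0.ne'] at h4
  have h5 := (log_le_orderOf (q := q) hq).1
  rw [Real.rpow_def_of_pos hy0, ← Real.exp_add, ← Real.log_le_iff_le_exp (norm_pos_iff.mpr l2.1)]
  rw [K₂]
  linarith [h2.1, h2.2, h3.1, h3.2]

end Sieve

/-! ### Counting -/

section Counting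

open scoped ArithmeticFunction.vonMangoldt

open scoped Classical in
/-- The positive integers up to `x` with no odd prime factor congruent to a power of `2`
modulo `q`. -/
noncomputable def goodSet (q : ℕ) (x : ℝ) : Finset ℕ := (Finset.Icc 1 ⌊x⌋₊).filter (Good q)

lemma mem_goodSet {q n : ℕ} {x : ℝ} : n ∈ goodSet q x ↔ (1 ≤ n ∧ n ≤ ⌊x⌋₊) ∧ Good q n := by
  simp only [goodSet, Finset.mem_filter, Finset.mem_Icc]

/-- Rankin's trick: the harmonic sum over `goodSet q x` is controlled by the Dirichlet series at
`1 + 1 / log x`. -/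
lemma sum_inv_goodSet_le (q : ℕ) {x : ℝ} (hx : 0 < x) (hy : 1 ≤ Real.log x) :
    ∑ n ∈ goodSet q x, (1 : ℝ) / n ≤
      Real.exp 1 * ‖dser (sieveFun q) (1 + 1 / Real.log x)‖ := by
  set y := Real.log x with hydef
  have hy0 : 0 < y := by linarith
  have hσ : 1 < 1 + 1 / y := by
    have : 0 < 1 / y := by positivity
    linarith
  have hs : HasSum (fun n : ℕ => (sieveFun q n * (((n : ℝ) ^ (-(1 + 1 / y)) : ℝ) : ℂ)).re)
      (dser (sieveFun q) (1 + 1 / y)).re :=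
    Complex.hasSum_re (summable_norm_term (norm_sieveFun_le q) hσ).of_norm.hasSum
  have hre : ∀ n : ℕ, (sieveFun q n * (((n : ℝ) ^ (-(1 + 1 / y)) : ℝ) : ℂ)).re =
      (sieveFun q n).re * (n : ℝ) ^ (-(1 + 1 / y)) := fun n => Complex.re_mul_ofReal _ _
  have h1 : ∑ n ∈ goodSet q x, (sieveFun q n * (((n : ℝ) ^ (-(1 + 1 / y)) : ℝ) : ℂ)).re ≤
      (dser (sieveFun q) (1 + 1 / y)).re := by
    refine sum_le_hasSum _ (fun n _ => ?_) hs
    rw [hre]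
    refine mul_nonneg ?_ (by positivity)
    by_cases h : Good q n
    · simp [sieveFun_of_good h]
    · simp [sieveFun_of_not_good h]
  have h2 := h1.trans (Complex.re_le_norm _)
  refine le_trans ?_ (mul_le_mul_of_nonneg_left h2 (Real.exp_pos 1).le)
  rw [Finset.mul_sum]
  refine Finset.sum_le_sum fun n hn => ?_
  obtain ⟨⟨hn1, hnx⟩, hg⟩ := mem_goodSet.mp hn
  have hn0 : (0 : ℝ) < n := by exact_mod_cast hn1
  have hnx' : (n : ℝ) ≤ x := (Nat.le_floor_iff hx.le).mp hnx
  rw [hre, sieveFun_of_good hg, Complex.one_re, one_mul, neg_add, Real.rpow_add hn0,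
    Real.rpow_neg_one, ← mul_assoc, mul_comm (Real.exp 1), mul_assoc, one_div]
  refine le_mul_of_one_le_right (by positivity) ?_
  rw [Real.rpow_def_of_pos hn0, ← Real.exp_add]
  refine Real.one_le_exp ?_
  have h3 : Real.log n ≤ y := Real.log_le_log hn0 hnx'
  have h4 : Real.log n * (1 / y) ≤ 1 := by
    rw [mul_one_div, div_le_one hy0]
    exact h3
  linarith

/-- Since `Good q` is inherited by divisors, `∑ log n` over `goodSet q x` is at most
`∑ ψ(x / m)` over the same set, which Chebyshev's bound controls. -/
lemma sum_log_goodSet_le (q : ℕ) {x : ℝ} (hx : 0 < x) :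
    ∑ n ∈ goodSet q x, Real.log n ≤
      (Real.log 4 + 4) * x * ∑ m ∈ goodSet q x, (1 : ℝ) / m := by
  have h1 : ∑ n ∈ goodSet q x, Real.log n =
      ∑ z ∈ (goodSet q x).sigma fun n => n.divisorsAntidiagonal, Λ z.2.1 := by
    rw [Finset.sum_sigma]
    refine Finset.sum_congr rfl fun n _ => ?_
    rw [← ArithmeticFunction.vonMangoldt_sum]
    exact (Nat.sum_divisorsAntidiagonal fun i _ => Λ i).symm
  have h2 : ∑ z ∈ (goodSet q x).sigma fun n => n.divisorsAntidiagonal, Λ z.2.1 ≤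
      ∑ w ∈ (goodSet q x).sigma fun m => Finset.Ioc 0 ⌊x / m⌋₊, Λ w.2 := by
    have hinj : Set.InjOn (fun z : (_ : ℕ) × (ℕ × ℕ) => (⟨z.2.2, z.2.1⟩ : (_ : ℕ) × ℕ))
        ((goodSet q x).sigma fun n => n.divisorsAntidiagonal) := by
      rintro ⟨n, a, b⟩ hz ⟨n', a', b'⟩ hz' h
      simp only [Finset.coe_sigma, Set.mem_sigma_iff, Finset.mem_coe,
        Nat.mem_divisorsAntidiagonal] at hz hz'
      simp only [Sigma.mk.injEq, heq_eq_eq] at h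
      obtain ⟨rfl, rfl⟩ := h
      obtain rfl : n = n' := hz.2.1.symm.trans hz'.2.1
      rfl
    rw [← Finset.sum_image (f := fun w : (_ : ℕ) × ℕ => Λ w.2) hinj]
    refine Finset.sum_le_sum_of_subset_of_nonneg ?_
      fun _ _ _ => ArithmeticFunction.vonMangoldt_nonneg
    intro w hw
    obtain ⟨⟨n, a, b⟩, hz, rfl⟩ := Finset.mem_image.mp hw
    obtain ⟨hn, hab⟩ := Finset.mem_sigma.mp hz
    obtain ⟨hab, hn0⟩ := Nat.mem_divisorsAntidiagonal.mp hab
    obtain ⟨⟨hn1, hnx⟩, hg⟩ := mem_goodSet.mp hn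
    dsimp only at hab hn0 hn1 hnx hg
    have ha : 0 < a := Nat.pos_of_ne_zero fun h => hn0 (by rw [← hab, h, zero_mul])
    have hb : 0 < b := Nat.pos_of_ne_zero fun h => hn0 (by rw [← hab, h, mul_zero])
    have hbn : b ∣ n := ⟨a, by rw [← hab, mul_comm]⟩
    refine Finset.mem_sigma.mpr ⟨mem_goodSet.mpr ⟨⟨hb, ?_⟩, hg.of_dvd hbn⟩, ?_⟩
    · exact (Nat.le_of_dvd hn1 hbn).trans hnx
    · refine Finset.mem_Ioc.mpr ⟨ha, Nat.le_floor ?_⟩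
      have hb' : (0 : ℝ) < b := by exact_mod_cast hb
      rw [le_div_iff₀ hb']
      have := (Nat.le_floor_iff hx.le).mp hnx
      rw [← hab] at this
      exact_mod_cast this
  rw [h1]
  refine h2.trans ?_
  rw [Finset.sum_sigma, Finset.mul_sum]
  refine Finset.sum_le_sum fun m _ => ?_
  have h3 := Chebyshev.psi_le_const_mul_self (x := x / m) (by positivity)
  rw [Chebyshev.psi] at h3
  refine h3.trans (le_of_eq ?_)
  ring

/-- The upper bound `|G(x)| log x ≪ x ∑ 1 / m`, the sum being over `G(x)`. -/
lemma card_goodSet_mul_log_le (q : ℕ) {x : ℝ} (hx : 0 < x) :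
    (goodSet q x).card * Real.log x ≤
      (Real.log 4 + 5) * x * ∑ m ∈ goodSet q x, (1 : ℝ) / m := by
  have h1 : (goodSet q x).card * Real.log x ≤
      ∑ n ∈ goodSet q x, (Real.log n + x * (1 / n)) := by
    rw [← nsmul_eq_mul, ← Finset.sum_const]
    refine Finset.sum_le_sum fun n hn => ?_
    have hn0 : (0 : ℝ) < n := by exact_mod_cast (mem_goodSet.mp hn).1.1
    have h2 := Real.log_le_self (show 0 ≤ x / n by positivity)
    rw [Real.log_div hx.ne' hn0.ne'] at h2
    rw [mul_one_div]
    linarith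
  rw [Finset.sum_add_distrib, ← Finset.mul_sum] at h1
  have h3 := sum_log_goodSet_le q hx
  linarith

lemma card_goodSet_le {q : ℕ} [NeZero q] (hq : Odd q) {x : ℝ} (hx : 0 < x)
    (hy : 1 ≤ Real.log x) :
    ((goodSet q x).card : ℝ) ≤ (Real.log 4 + 5) * Real.exp (5 * orderOf (2 : ZMod q) + K₂ + 1) *
      x / Real.log x ^ ((orderOf (2 : ZMod q) : ℝ) / q.totient) := by
  have hy0 : 0 < Real.log x := by linarith
  have h4 : 0 ≤ Real.log 4 := Real.log_nonneg (by norm_num)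
  have h1 := (sum_inv_goodSet_le q hx hy).trans
    (mul_le_mul_of_nonneg_left (norm_dser_sieveFun_le hq hy) (Real.exp_pos 1).le)
  have h2 := (card_goodSet_mul_log_le q hx).trans
    (mul_le_mul_of_nonneg_left h1 (show 0 ≤ (Real.log 4 + 5) * x by positivity))
  rw [← le_div_iff₀ hy0] at h2
  refine h2.trans (le_of_eq ?_)
  rw [Real.rpow_sub hy0, Real.rpow_one, Real.exp_add (5 * (orderOf (2 : ZMod q) : ℝ) + K₂) 1]
  field_simp

end Counting

/-- The absolute constant of the theorem. -/
noncomputable def c₃ : ℝ := (Real.log 4 + 5) * Real.exp (K₂ + 6)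

lemma one_le_c₃ : 1 ≤ c₃ := by
  have h4 : 0 ≤ Real.log 4 := Real.log_nonneg (by norm_num)
  have h5 : 1 ≤ Real.exp (K₂ + 6) := Real.one_le_exp (by linarith [K₂_nonneg])
  exact one_le_mul_of_one_le_of_one_le (by linarith) h5

lemma le_c₃_pow {r : ℕ} (hr : 0 < r) :
    (Real.log 4 + 5) * Real.exp (5 * r + K₂ + 1) ≤ c₃ ^ r := by
  have h4 : 0 ≤ Real.log 4 := Real.log_nonneg (by norm_num)
  have hr' : (1 : ℝ) ≤ r := by exact_mod_cast hr
  rw [c₃, mul_pow, ← Real.exp_nat_mul]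
  refine mul_le_mul (le_self_pow₀ (by linarith) hr.ne') (Real.exp_le_exp.mpr ?_)
    (Real.exp_pos _).le (by positivity)
  nlinarith [K₂_nonneg]

/-- There is an absolute constant `c₃` such that for every `P` with `P(0) = 1`,
`A(P,x) ≤ 7 c₃^r x / (log x)^(r/φ(q))` for all `x > 1`, where `q = q(P)` and `r` is the
multiplicative order of `2` modulo `q`. -/
theorem stmt1 :
    ∃ c₃ : ℝ, ∀ P : Polynomial (ZMod 2), P.coeff 0 = 1 →
      ∀ A : Set ℕ, (∀ a ∈ A, 0 < a) →
        (∀ n : ℕ, (partitionCount A n : ZMod 2) = P.coeff n) →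
          ∀ x : ℝ, 1 < x →
            (countA A x : ℝ) ≤ 7 * c₃ ^ orderOf (2 : ZMod (qOf P)) * x /
              Real.log x ^ ((orderOf (2 : ZMod (qOf P)) : ℝ) / (Nat.totient (qOf P) : ℝ)) := by
  refine ⟨c₃, fun P hP A hA hpar x hx => ?_⟩
  have : NeZero (qOf P) := ⟨(qOf_mem hP).1.ne'⟩
  have hq := qOf_odd hP
  have hr := (log_le_orderOf hq).2
  have hx0 : 0 < x := by linarith
  have hl : 0 < Real.log x := Real.log_pos hx
  set r := orderOf (2 : ZMod (qOf P)) with hrdef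
  have hc : 1 ≤ c₃ ^ r := one_le_pow₀ one_le_c₃
  have h7 : c₃ ^ r * x ≤ 7 * c₃ ^ r * x := by
    have : 0 ≤ c₃ ^ r * x := by positivity
    linarith
  rcases le_or_gt 1 (Real.log x) with hy | hy
  · have h1 : (countA A x : ℝ) ≤ (goodSet (qOf P) x).card := by
      rw [countA, ← Set.ncard_coe_finset]
      refine Nat.cast_le.mpr (Set.ncard_le_ncard ?_ (Finset.finite_toSet _))
      rintro n ⟨hnA, hn1, hnx⟩
      refine Finset.mem_coe.mpr (mem_goodSet.mpr ⟨⟨hn1, Nat.le_floor hnx⟩, ?_⟩)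
      rintro p hp hp2 ⟨j, hj⟩
      exact not_dvd_of_mem hP hA hpar hp hp2 hj hnA
    refine (h1.trans (card_goodSet_le hq hx0 hy)).trans ?_
    refine div_le_div_of_nonneg_right (le_trans ?_ h7) (by positivity)
    exact mul_le_mul_of_nonneg_right (le_c₃_pow hr) hx0.le
  · -- for `x < e` the trivial bound `A(P, x) ≤ x` is enough
    have h1 : (countA A x : ℝ) ≤ x := by
      have h2 : countA A x ≤ (Finset.Icc 1 ⌊x⌋₊).card := by
        rw [countA, ← Set.ncard_coe_finset]
        refine Set.ncard_le_ncard ?_ (Finset.finite_toSet _)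
        rintro n ⟨-, hn1, hnx⟩
        exact Finset.mem_coe.mpr (Finset.mem_Icc.mpr ⟨hn1, Nat.le_floor hnx⟩)
      rw [Nat.card_Icc, Nat.add_sub_cancel] at h2
      exact (Nat.cast_le.mpr h2).trans (Nat.floor_le hx0.le)
    rw [le_div_iff₀ (by positivity)]
    have h3 : Real.log x ^ ((r : ℝ) / (Nat.totient (qOf P) : ℝ)) ≤ 1 :=
      Real.rpow_le_one hl.le hy.le (by positivity)
    calc (countA A x : ℝ) * Real.log x ^ ((r : ℝ) / (Nat.totient (qOf P) : ℝ)) ≤ x * 1 :=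
          mul_le_mul h1 h3 (by positivity) hx0.le
      _ ≤ c₃ ^ r * x := by nlinarith
      _ ≤ _ := h7
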